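/- arXiv:1412.3681 — 3 statements merged into one kernel-verified Lean document; each statement's English description precedes it below -/
import Mathlib

section
/- Let G be a countable set, (Ω, ℬ, ℙ) a probability space, and V : Ω → (G → ℝ) a jointly measurable, uniformly bounded random potential (|V(x;ω)| ≤ C for all x, ω). For Λ ⊆ G let ℬ_{Λᶜ} denote the sub-σ-algebra generated by the random variables {V(y)}_{y∈G∖Λ}. Assume: (1) the random potential has the K-property, i.e. every random variable that is measurable with respect to ℬ_{Λᶜ} for every finite Λ ⊂ G is ℙ-almost surely constant; (2) for each x ∈ G, the regular conditional distribution of V(x) given the remaining variables (V(y))_{y≠x} is ℙ-almost surely atomless. Let A be a bounded self-adjoint operator on ℓ²(G), H(ω) = A + V(ω) (with V(ω) acting as multiplication), and γ_x(E;ω) := lim_{η↓0} ‖(H(ω) − (E+iη))⁻¹ δ_x‖², a limit which exists in (0, ∞] by monotonicity. Then for every x ∈ G and Lebesgue-almost every E ∈ ℝ, the probability ℙ(γ_x(E) < ∞) equals either 0 or 1. -/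
open MeasureTheory ProbabilityTheory Filter Topology
open scoped ENNReal

/-!
The number `γ_x(E; ω)` is finite exactly when `δ_x` lies in the range of `A + V(ω) - E`. Changing
the potential at one site is a rank-one perturbation, and for a rank-one family `T + t ℓ(·) e` the
set of `t` for which a fixed vector is in the range has at most one point or misses at most one
point. Since the conditional distribution of a single site has no atoms, the dependence of the event
on that site can therefore be erased up to a null set. Erasing all sites one after another and
passing to the limit superior gives an almost surely equal event that is independent of any finite
set of sites, and the K-property makes it trivial.
-/

namespace SimonWolff

open Function Metric Set

local notation "ℓ²(" G ")" => lp (fun _ : G => ℂ) 2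

section SitewiseErasure

variable {ι X : Type*} [DecidableEq ι] {S : Set (ι → X)}

/-- Every one-site section of `S` contains at most one point or misses at most one point, i.e.
freezing all coordinates but one makes membership in `S` constant up to a single value. -/
def HasNearlyTrivialSections (S : Set (ι → X)) : Prop :=
  ∀ (w : ι → X) (y : ι),
    (update w y ⁻¹' S).Subsingleton ∨ (update w y ⁻¹' S)ᶜ.Subsingleton

/-- Membership in `S` does not depend on the coordinate `y`. -/
def IsInvariantAt (y : ι) (S : Set (ι → X)) : Prop :=
  ∀ (w : ι → X) (t : X), update w y t ∈ S ↔ w ∈ S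

/-- The configurations whose section of `S` through the site `y` misses at most one point. For a
set with nearly trivial sections this is `S` with its dependence on `w y` erased. -/
def eraseSite (y : ι) (S : Set (ι → X)) : Set (ι → X) :=
  {w | (update w y ⁻¹' S)ᶜ.Subsingleton}

lemma isInvariantAt_eraseSite_self (y : ι) (S : Set (ι → X)) :
    IsInvariantAt y (eraseSite y S) := fun w t => by
  simp only [eraseSite, mem_ofPred_eq, preimage, update_idem]

lemma IsInvariantAt.eraseSite {z : ι} (hS : IsInvariantAt z S) (y : ι) :
    IsInvariantAt z (eraseSite y S) := by
  obtain rfl | hzy := eq_or_ne z y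
  · exact isInvariantAt_eraseSite_self z S
  · intro w t
    simp only [SimonWolff.eraseSite, mem_ofPred_eq, preimage, update_comm hzy, hS _ t]

lemma IsInvariantAt.piecewise_mem_iff (hS : ∀ y, IsInvariantAt y S) (Λ : Finset ι)
    (v w : ι → X) : Λ.piecewise v w ∈ S ↔ w ∈ S := by
  induction Λ using Finset.induction_on with
  | empty => rw [Finset.piecewise_empty]
  | insert y Λ _ ih => rw [Finset.piecewise_insert, hS y, ih]

/-- The sets obtained from `S` by erasing successively the sites `g 0`, `g 1`, and so on. -/
def eraseSeq (g : ℕ → ι) (S : Set (ι → X)) : ℕ → Set (ι → X)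
  | 0 => S
  | n + 1 => eraseSite (g n) (eraseSeq g S n)

lemma isInvariantAt_eraseSeq (g : ℕ → ι) (S : Set (ι → X)) {i n : ℕ} (hin : i < n) :
    IsInvariantAt (g i) (eraseSeq g S n) := by
  induction n, hin using Nat.le_induction with
  | base => exact isInvariantAt_eraseSite_self _ _
  | succ n _ ih => exact ih.eraseSite _

lemma isInvariantAt_limsup_eraseSeq {g : ℕ → ι} (hg : Surjective g) (S : Set (ι → X)) (y : ι) :
    IsInvariantAt y (limsup (eraseSeq g S) atTop) := by
  obtain ⟨i, rfl⟩ := hg y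
  intro w t
  simp only [mem_limsup_iff_frequently_mem]
  refine frequently_congr ?_
  filter_upwards [eventually_gt_atTop i] with n hn
  exact isInvariantAt_eraseSeq g S hn w t

namespace HasNearlyTrivialSections

lemma notMem_eraseSite (hS : HasNearlyTrivialSections S) {w : ι → X} {y : ι}
    (hw : w ∉ eraseSite y S) : (update w y ⁻¹' S).Subsingleton :=
  (hS w y).resolve_right hw

lemma subsingleton_section_symmDiff_eraseSite (hS : HasNearlyTrivialSections S)
    (w : ι → X) (y : ι) :
    (update w y ⁻¹' symmDiff S (eraseSite y S)).Subsingleton := by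
  have hinv (t : X) := isInvariantAt_eraseSite_self y S w t
  by_cases hw : w ∈ eraseSite y S
  · exact hw.anti fun t => by simp [mem_symmDiff, hinv, hw]
  · exact (hS.notMem_eraseSite hw).anti fun t => by simp [mem_symmDiff, hinv, hw]

protected lemma eraseSite [Infinite X] (hS : HasNearlyTrivialSections S) (y : ι) :
    HasNearlyTrivialSections (eraseSite y S) := by
  intro w z
  obtain rfl | hzy := eq_or_ne z y
  · have hinv (t : X) := isInvariantAt_eraseSite_self z S w t
    by_cases hw : w ∈ SimonWolff.eraseSite z S
    · exact .inr fun t ht => (ht <| (hinv t).2 hw).elim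
    · exact .inl fun t ht => (hw <| (hinv t).1 ht).elim
  by_contra! hcon
  obtain ⟨⟨a, ha, b, hb, hab⟩, ⟨c, hc, d, hd, hcd⟩⟩ := hcon
  have hfin : ((update (update w z a) y ⁻¹' S)ᶜ ∪ (update (update w z b) y ⁻¹' S)ᶜ ∪
      (update (update w z c) y ⁻¹' S ∪ update (update w z d) y ⁻¹' S)).Finite :=
    (ha.finite.union hb.finite).union
      ((hS.notMem_eraseSite hc).finite.union (hS.notMem_eraseSite hd).finite)
  obtain ⟨s, hs⟩ := hfin.exists_notMem
  simp only [mem_union, mem_compl_iff, mem_preimage, not_or, not_not, update_comm hzy] at hs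
  obtain ⟨⟨hsa, hsb⟩, hsc, hsd⟩ := hs
  rcases hS (update w y s) z with h | h
  · exact hab (h hsa hsb)
  · exact hcd (h hsc hsd)

lemma mem_eraseSite_iff (hS : HasNearlyTrivialSections S) (e : ℕ ↪ X) (y : ι) (w : ι → X) :
    w ∈ eraseSite y S ↔
      ∃ m n, m ≠ n ∧ update w y (e m) ∈ S ∧ update w y (e n) ∈ S := by
  constructor
  · intro hw
    have hinf : (e ⁻¹' (update w y ⁻¹' S)).Infinite := by
      have hfin : (e ⁻¹' (update w y ⁻¹' S)ᶜ).Finite := hw.finite.preimage e.injective.injOn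
      simpa using hfin.infinite_compl
    obtain ⟨m, hm, n, hn, hmn⟩ := hinf.nontrivial
    exact ⟨m, n, hmn, hm, hn⟩
  · rintro ⟨m, n, hmn, hm, hn⟩
    exact (hS w y).resolve_left fun h => hmn (e.injective (h hm hn))

lemma measurableSet_eraseSite [Infinite X] [MeasurableSpace X]
    (hS : HasNearlyTrivialSections S) (hm : MeasurableSet S) (y : ι) :
    MeasurableSet (eraseSite y S) := by
  have heq : eraseSite y S = ⋃ (m : ℕ) (n : ℕ) (_ : m ≠ n),
      {w | update w y (Infinite.natEmbedding X m) ∈ S} ∩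
        {w | update w y (Infinite.natEmbedding X n) ∈ S} := by
    ext w
    simp only [hS.mem_eraseSite_iff (Infinite.natEmbedding X), mem_iUnion, exists_prop,
      mem_inter_iff, mem_ofPred_eq]
  have hmeas (t : X) : MeasurableSet {w | update w y t ∈ S} := measurable_update_left hm
  rw [heq]
  exact .iUnion fun m => .iUnion fun n => .iUnion fun _ => (hmeas _).inter (hmeas _)

protected lemma eraseSeq [Infinite X] (hS : HasNearlyTrivialSections S) (g : ℕ → ι) (n : ℕ) :
    HasNearlyTrivialSections (eraseSeq g S n) := by
  induction n with
  | zero => exact hS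
  | succ n ih => exact ih.eraseSite _

lemma measurableSet_eraseSeq [Infinite X] [MeasurableSpace X] (hS : HasNearlyTrivialSections S)
    (hm : MeasurableSet S) (g : ℕ → ι) (n : ℕ) : MeasurableSet (eraseSeq g S n) := by
  induction n with
  | zero => exact hm
  | succ n ih => exact (hS.eraseSeq g n).measurableSet_eraseSite ih _

end HasNearlyTrivialSections

end SitewiseErasure

section ZeroOne

variable {ι Ω X : Type*} [MeasurableSpace Ω] [MeasurableSpace X]
  {μ : Measure Ω} {V : Ω → ι → X} {S : Set (ι → X)}

/-- The K-property of the random field `V`: a random variable which, for every finite `Λ`, is a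
function of the field outside `Λ` is almost surely constant. -/
def HasKProperty (μ : Measure Ω) (V : Ω → ι → X) : Prop :=
  ∀ f : Ω → ℝ,
    (∀ Λ : Finset ι,
      Measurable[⨆ y ∈ (Λ : Set ι)ᶜ, MeasurableSpace.comap (fun ω => V ω y) inferInstance] f) →
    ∃ c : ℝ, ∀ᵐ ω ∂μ, f ω = c

/-- Almost surely, the regular conditional distribution of the field `V` at the site `y` given the
field at all other sites has no atoms. -/
def IsCondAtomless [StandardBorelSpace X] [Nonempty X] (μ : Measure Ω) [IsFiniteMeasure μ]
    (V : Ω → ι → X) (y : ι) : Prop :=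
  ∀ᵐ b ∂(μ.map (fun ω (u : {u : ι // u ≠ y}) => V ω (u : ι))),
    ∀ t : X, condDistrib (fun ω => V ω y) (fun ω (u : {u : ι // u ≠ y}) => V ω (u : ι)) μ b {t} = 0

lemma ae_notMem_of_countable_sections {β : Type*} [MeasurableSpace β]
    [StandardBorelSpace X] [Nonempty X] [IsFiniteMeasure μ] {Y : Ω → β} {Z : Ω → X}
    (hY : Measurable Y) (hZ : Measurable Z)
    (hatomless : ∀ᵐ b ∂(μ.map Y), ∀ t, condDistrib Z Y μ b {t} = 0)
    {D : Set (β × X)} (hD : MeasurableSet D) (hcount : ∀ b, (Prod.mk b ⁻¹' D).Countable) :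
    ∀ᵐ ω ∂μ, (Y ω, Z ω) ∉ D := by
  refine ae_of_ae_map (p := fun q => q ∉ D) (hY.prodMk hZ).aemeasurable ?_
  rw [← compProd_map_condDistrib hZ.aemeasurable]
  refine Measure.ae_compProd_of_ae_ae hD.compl ?_
  filter_upwards [hatomless] with b hb
  have : NullSingletonClass (condDistrib Z Y μ b) := ⟨hb⟩
  exact measure_eq_zero_iff_ae_notMem.1 ((hcount b).measure_zero _)

lemma IsCondAtomless.ae_notMem [DecidableEq ι] [StandardBorelSpace X] [Nonempty X]
    [IsFiniteMeasure μ] (hV : Measurable V) {y : ι} (hy : IsCondAtomless μ V y)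
    {D : Set (ι → X)} (hD : MeasurableSet D) (hcount : ∀ w, (update w y ⁻¹' D).Countable) :
    ∀ᵐ ω ∂μ, V ω ∉ D := by
  let join (q : ({u : ι // u ≠ y} → X) × X) : ι → X := (Equiv.funSplitAt y X).symm q.swap
  have hjoin : Measurable join := by
    refine measurable_pi_lambda _ fun u => ?_
    by_cases hu : u = y <;>
      simp only [join, Equiv.funSplitAt_symm_apply, hu, dite_true, dite_false] <;> fun_prop
  have hsec (b : {u : ι // u ≠ y} → X) : (Prod.mk b ⁻¹' (join ⁻¹' D)).Countable := by
    convert hcount (join (b, Classical.arbitrary X)) using 1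
    ext t
    have : join (b, t) = update (join (b, Classical.arbitrary X)) y t := by
      ext u
      by_cases hu : u = y <;> simp [join, hu]
    simp [this]
  have hjoinV (ω : Ω) : join (fun u => V ω u, V ω y) = V ω :=
    (Equiv.funSplitAt y X).symm_apply_apply (V ω)
  simpa only [mem_preimage, hjoinV] using
    ae_notMem_of_countable_sections (by fun_prop) (by fun_prop) hy (hjoin hD) hsec

lemma measurable_piecewise [DecidableEq ι] {Ω' : Type*} {m : MeasurableSpace Ω'} {W : Ω' → ι → X}
    {Λ : Finset ι} (w₀ : ι → X) (hW : ∀ u ∉ Λ, Measurable fun ω => W ω u) :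
    Measurable fun ω => Λ.piecewise w₀ (W ω) := by
  refine measurable_pi_lambda _ fun u => ?_
  by_cases hu : u ∈ Λ
  · simp only [Finset.piecewise_eq_of_mem _ _ _ hu, measurable_const]
  · simpa only [Finset.piecewise_eq_of_notMem _ _ _ hu] using hW u hu

lemma HasKProperty.measure_preimage_of_isInvariantAt [DecidableEq ι] [Nonempty X]
    [IsProbabilityMeasure μ] (hK : HasKProperty μ V) (hS : MeasurableSet S)
    (hinv : ∀ y, IsInvariantAt y S) : μ (V ⁻¹' S) = 0 ∨ μ (V ⁻¹' S) = 1 := by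
  have hconst : EventuallyConst (V ⁻¹' S) (ae μ) := by
    refine EventuallyConst.of_indicator_const (c := (1 : ℝ)) ?_ one_ne_zero
    refine eventuallyConst_iff_exists_eventuallyEq.2 (hK _ fun Λ => ?_)
    refine Measurable.indicator measurable_const ?_
    let w₀ : ι → X := fun _ => Classical.arbitrary X
    have heq : V ⁻¹' S = (fun ω => Λ.piecewise w₀ (V ω)) ⁻¹' S := by
      ext ω
      exact (IsInvariantAt.piecewise_mem_iff hinv Λ w₀ (V ω)).symm
    rw [heq]
    refine measurable_piecewise w₀ (fun u hu => measurable_iff_comap_le.2 ?_) hS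
    exact le_iSup₂_of_le u hu le_rfl
  rcases eventuallyConst_set'.1 hconst with h | h
  · exact .inl ((measure_congr h).trans measure_empty)
  · exact .inr ((measure_congr h).trans measure_univ)

variable [DecidableEq ι] [Infinite X] [StandardBorelSpace X]

lemma HasNearlyTrivialSections.preimage_eraseSite_ae_eq [IsFiniteMeasure μ]
    (hS : HasNearlyTrivialSections S) (hm : MeasurableSet S) (hV : Measurable V) {y : ι}
    (hy : IsCondAtomless μ V y) : V ⁻¹' eraseSite y S =ᵐ[μ] V ⁻¹' S := by
  have hD := hm.symmDiff (hS.measurableSet_eraseSite hm y)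
  filter_upwards [hy.ae_notMem hV hD fun w =>
    (hS.subsingleton_section_symmDiff_eraseSite w y).countable] with ω hω
  rw [mem_symmDiff] at hω
  change (V ω ∈ eraseSite y S) = (V ω ∈ S)
  exact propext (by tauto)

lemma HasNearlyTrivialSections.preimage_eraseSeq_ae_eq [IsFiniteMeasure μ]
    (hS : HasNearlyTrivialSections S) (hm : MeasurableSet S) (hV : Measurable V)
    (hatomless : ∀ y, IsCondAtomless μ V y) (g : ℕ → ι) (n : ℕ) :
    V ⁻¹' SimonWolff.eraseSeq g S n =ᵐ[μ] V ⁻¹' S := by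
  induction n with
  | zero => exact ae_eq_refl _
  | succ n ih =>
    exact ((hS.eraseSeq g n).preimage_eraseSite_ae_eq (hS.measurableSet_eraseSeq hm g n) hV
      (hatomless _)).trans ih

theorem HasNearlyTrivialSections.measure_preimage_eq_zero_or_one [Countable ι]
    [IsProbabilityMeasure μ] (hS : HasNearlyTrivialSections S) (hm : MeasurableSet S)
    (hV : Measurable V) (hK : HasKProperty μ V) (hatomless : ∀ y, IsCondAtomless μ V y) :
    μ (V ⁻¹' S) = 0 ∨ μ (V ⁻¹' S) = 1 := by
  obtain _ | _ := isEmpty_or_nonempty ι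
  · exact hK.measure_preimage_of_isInvariantAt hm isEmptyElim
  obtain ⟨g, hg⟩ := exists_surjective_nat ι
  let T : Set (ι → X) := limsup (SimonWolff.eraseSeq g S) atTop
  have hT : MeasurableSet T := .measurableSet_limsup (hS.measurableSet_eraseSeq hm g)
  have hTS : V ⁻¹' T =ᵐ[μ] V ⁻¹' S := by
    have hlim : V ⁻¹' T = limsup (fun n => V ⁻¹' SimonWolff.eraseSeq g S n) atTop := by
      ext ω
      simp only [T, mem_preimage, mem_limsup_iff_frequently_mem]
    rw [hlim]
    exact limsup_ae_eq_of_forall_ae_eq _ (hS.preimage_eraseSeq_ae_eq hm hV hatomless g)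
  rw [← measure_congr hTS]
  exact hK.measure_preimage_of_isInvariantAt hT (isInvariantAt_limsup_eraseSeq hg S)

end ZeroOne

section RankOne

lemma subsingleton_or_compl_subsingleton_setOf_exists_add_smul_eq {K M N : Type*} [Field K]
    [AddCommGroup M] [Module K M] [AddCommGroup N] [Module K N]
    (T : M →ₗ[K] N) (ℓ : M →ₗ[K] K) (e f : N) :
    {t : K | ∃ ψ, T ψ + (t * ℓ ψ) • e = f}.Subsingleton ∨
      {t : K | ∃ ψ, T ψ + (t * ℓ ψ) • e = f}ᶜ.Subsingleton := by
  refine or_iff_not_imp_left.2 fun hnontriv => ?_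
  obtain ⟨t₁, ⟨ψ₁, h₁⟩, t₂, ⟨ψ₂, h₂⟩, hne⟩ := not_subsingleton_iff.1 hnontriv
  -- For `d t ≠ 0` an affine combination of `ψ₁` and `ψ₂` solves the equation at `t`.
  let d (t : K) : K := (t₂ - t) * ℓ ψ₂ - (t₁ - t) * ℓ ψ₁
  have hd (t : K) (ht : ¬ ∃ ψ, T ψ + (t * ℓ ψ) • e = f) : d t = 0 := by
    by_contra hdt
    refine ht ⟨(d t)⁻¹ • (((t₂ - t) * ℓ ψ₂) • ψ₁ - ((t₁ - t) * ℓ ψ₁) • ψ₂), ?_⟩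
    rw [← eq_sub_iff_add_eq] at h₁ h₂
    have hf : f = (d t)⁻¹ • d t • f := (inv_smul_smul₀ hdt f).symm
    conv_rhs => rw [hf]
    simp only [map_smul, map_sub, h₁, h₂, smul_eq_mul, d]
    module
  intro s hs t ht
  by_contra hst
  have hℓ : ℓ ψ₁ = ℓ ψ₂ := by
    refine sub_eq_zero.1 ((mul_eq_zero.1 ?_).resolve_left (sub_ne_zero.2 hst))
    linear_combination hd s hs - hd t ht
  have hℓ₁ : ℓ ψ₁ = 0 := by
    refine (mul_eq_zero.1 ?_).resolve_left (sub_ne_zero.2 hne.symm)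
    linear_combination hd s hs + (t₂ - s) * hℓ
  exact hs ⟨ψ₁, by simpa [hℓ₁] using h₁⟩

end RankOne

section WeakCompactness

lemma continuousOn_weakDual_apply {𝕜 E : Type*} [NontriviallyNormedField 𝕜]
    [SeminormedAddCommGroup E] [NormedSpace 𝕜 E] (r : ℝ) :
    ContinuousOn (fun q : WeakDual 𝕜 E × E => q.1 q.2)
      ((WeakDual.toStrongDual ⁻¹' closedBall 0 r) ×ˢ univ) := by
  rintro ⟨F₀, a₀⟩ -
  refine tendsto_iff_norm_sub_tendsto_zero.2 ?_
  have hlim : Tendsto (fun q : WeakDual 𝕜 E × E => r * ‖q.2 - a₀‖ + ‖q.1 a₀ - F₀ a₀‖)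
      (𝓝 (F₀, a₀)) (𝓝 0) := by
    have hcont : Continuous fun q : WeakDual 𝕜 E × E => r * ‖q.2 - a₀‖ + ‖q.1 a₀ - F₀ a₀‖ := by
      have := (WeakDual.eval_continuous (𝕜 := 𝕜) a₀).comp (continuous_fst (Y := E))
      fun_prop
    simpa using hcont.tendsto (F₀, a₀)
  refine squeeze_zero' (.of_forall fun _ => norm_nonneg _) ?_
    (hlim.mono_left nhdsWithin_le_nhds)
  filter_upwards [self_mem_nhdsWithin] with ⟨F, a⟩ ⟨hF, _⟩
  calc ‖F a - F₀ a₀‖ = ‖F (a - a₀) + (F a₀ - F₀ a₀)‖ := by rw [map_sub, sub_add_sub_cancel]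
    _ ≤ ‖F (a - a₀)‖ + ‖F a₀ - F₀ a₀‖ := norm_add_le _ _
    _ ≤ r * ‖a - a₀‖ + ‖F a₀ - F₀ a₀‖ := by
      gcongr
      exact (WeakDual.toStrongDual F).le_of_opNorm_le (mem_closedBall_zero_iff.1 hF) _

lemma isClosed_setOf_exists_weakDual_apply_eq {𝕜 E P ι : Type*} [NontriviallyNormedField 𝕜]
    [ProperSpace 𝕜] [SeminormedAddCommGroup E] [NormedSpace 𝕜 E] [TopologicalSpace P]
    (r : ℝ) {a : ι → P → E} {b : ι → P → 𝕜} (ha : ∀ i, Continuous (a i))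
    (hb : ∀ i, Continuous (b i)) :
    IsClosed {p | ∃ F : StrongDual 𝕜 E, ‖F‖ ≤ r ∧ ∀ i, F (a i p) = b i p} := by
  let K : Set (WeakDual 𝕜 E) := WeakDual.toStrongDual ⁻¹' closedBall 0 r
  have : CompactSpace K := isCompact_iff_compactSpace.1 (WeakDual.isCompact_closedBall 0 r)
  have hclosed : IsClosed {q : K × P | ∀ i, q.1.1 (a i q.2) = b i q.2} := by
    simp only [ofPred_forall]
    refine isClosed_iInter fun i => isClosed_eq ?_ (by fun_prop)
    exact (continuousOn_weakDual_apply r).comp_continuous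
      (f := fun q : K × P => (q.1.1, a i q.2)) (by fun_prop) fun q => ⟨q.1.2, mem_univ _⟩
  convert isClosedMap_snd_of_compactSpace _ hclosed using 1
  ext p
  constructor
  · rintro ⟨F, hF, h⟩
    exact ⟨(⟨StrongDual.toWeakDual F, by simpa [K] using hF⟩, p), h, rfl⟩
  · rintro ⟨⟨⟨F, hF⟩, q⟩, h, rfl⟩
    exact ⟨WeakDual.toStrongDual F, by simpa [K] using hF, h⟩

variable {𝕜 E P : Type*} [RCLike 𝕜] [NormedAddCommGroup E] [InnerProductSpace 𝕜 E]
  [CompleteSpace E] [TopologicalSpace P]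

lemma isClosed_setOf_exists_norm_le_forall_apply_eq {ι : Type*} (r : ℝ)
    {L : ι → P → StrongDual 𝕜 E} {b : ι → P → 𝕜} (hL : ∀ i, Continuous (L i))
    (hb : ∀ i, Continuous (b i)) :
    IsClosed {p | ∃ ψ : E, ‖ψ‖ ≤ r ∧ ∀ i, L i p ψ = b i p} := by
  let riesz := InnerProductSpace.toDual 𝕜 E
  convert isClosed_setOf_exists_weakDual_apply_eq r (a := fun i p => riesz.symm (L i p))
    (b := fun i p => star (b i p)) (fun i => riesz.symm.continuous.comp (hL i))
    (fun i => (hb i).star) using 3 with p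
  have hriesz (ψ : E) (i : ι) : riesz ψ (riesz.symm (L i p)) = star (L i p ψ) := by
    rw [InnerProductSpace.toDual_apply_apply, ← inner_conj_symm,
      InnerProductSpace.toDual_symm_apply]
    rfl
  rw [riesz.surjective.exists]
  simp only [LinearIsometryEquiv.norm_map, hriesz, star_inj]

lemma isClosed_setOf_exists_norm_le_apply_eq {F : Type*} [NormedAddCommGroup F]
    [InnerProductSpace 𝕜 F] (r : ℝ) {T : P → E →L[𝕜] F} {f : P → F} (hT : Continuous T)
    (hf : Continuous f) :
    IsClosed {p | ∃ ψ : E, ‖ψ‖ ≤ r ∧ T p ψ = f p} := by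
  convert isClosed_setOf_exists_norm_le_forall_apply_eq r
    (L := fun v p => innerSL 𝕜 v ∘L T p) (b := fun v p => inner 𝕜 v (f p))
    (fun v => by fun_prop) (fun v => by fun_prop) using 5 with p ψ
  exact and_congr_right fun _ => ext_iff_inner_left (E := F) 𝕜

end WeakCompactness

section Resolvent

lemma isUnit_sub_smul_one {R : Type*} [CStarAlgebra R] {a : R} (ha : IsSelfAdjoint a) {z : ℂ}
    (hz : z.im ≠ 0) : IsUnit (a - z • 1) := by
  by_contra h
  have hspec : z ∈ spectrum ℂ a := by
    rwa [spectrum.mem_iff, Algebra.algebraMap_eq_smul_one, IsUnit.sub_iff]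
  exact hz (by rw [ha.mem_spectrum_eq_re hspec, Complex.ofReal_im])

variable {𝓗 : Type*} [NormedAddCommGroup 𝓗] [InnerProductSpace ℂ 𝓗] [CompleteSpace 𝓗]
  {H : 𝓗 →L[ℂ] 𝓗}

lemma abs_im_mul_norm_le_norm_sub_smul_one_apply (hH : IsSelfAdjoint H) (z : ℂ)
    (ψ : 𝓗) : |z.im| * ‖ψ‖ ≤ ‖(H - z • 1) ψ‖ := by
  obtain hψ | hψ := (norm_nonneg ψ).eq_or_lt
  · simp [← hψ]
  have him : (inner ℂ ψ ((H - z • 1) ψ)).im = -(z.im * ‖ψ‖ ^ 2) := by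
    have hsym : (inner ℂ ψ (H ψ)).im = 0 := by
      simpa using hH.isSymmetric.im_inner_self_apply ψ
    simp [inner_self_eq_norm_sq_to_K, hsym, ← Complex.ofReal_pow]
  refine le_of_mul_le_mul_left ?_ hψ
  calc ‖ψ‖ * (|z.im| * ‖ψ‖) = |(inner ℂ ψ ((H - z • 1) ψ)).im| := by
        rw [him, abs_neg, abs_mul, abs_sq]; ring
    _ ≤ ‖inner ℂ ψ ((H - z • 1) ψ)‖ := Complex.abs_im_le_norm _
    _ ≤ ‖ψ‖ * ‖(H - z • 1) ψ‖ := norm_inner_le_norm _ _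

lemma norm_inverse_sub_apply_le (hH : IsSelfAdjoint H) (E : ℝ) {η : ℝ} (hη : 0 < η) (φ : 𝓗) :
    ‖Ring.inverse (H - ((E : ℂ) + η * Complex.I) • 1) ((H - (E : ℂ) • 1) φ)‖ ≤ 2 * ‖φ‖ := by
  set z : ℂ := (E : ℂ) + η * Complex.I with hz
  have him : z.im = η := by simp [hz]
  have hunit : IsUnit (H - z • 1) := isUnit_sub_smul_one hH (him ▸ hη.ne')
  set R := Ring.inverse (H - z • 1)
  have hR : R * (H - (E : ℂ) • 1) = 1 + (η * Complex.I : ℂ) • R := by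
    have hsplit : H - (E : ℂ) • 1 = (H - z • 1) + (η * Complex.I : ℂ) • 1 := by
      rw [hz]; module
    rw [hsplit, mul_add, Ring.inverse_mul_cancel _ hunit, mul_smul_comm, mul_one]
  have hRφ : η * ‖R φ‖ ≤ ‖φ‖ := by
    have := abs_im_mul_norm_le_norm_sub_smul_one_apply hH z (R φ)
    rwa [him, abs_of_pos hη, ← mul_apply_eq_comp,
      Ring.mul_inverse_cancel _ hunit] at this
  calc ‖R ((H - (E : ℂ) • 1) φ)‖ = ‖φ + (η * Complex.I : ℂ) • R φ‖ :=
        congrArg (fun T : 𝓗 →L[ℂ] 𝓗 => ‖T φ‖) hR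
    _ ≤ ‖φ‖ + η * ‖R φ‖ := (norm_add_le _ _).trans_eq (by simp [norm_smul, abs_of_pos hη])
    _ ≤ 2 * ‖φ‖ := by linarith

theorem iSup_norm_inverse_sub_sq_lt_top_iff (hH : IsSelfAdjoint H) (E : ℝ) (f : 𝓗) :
    (⨆ η : {η : ℝ // 0 < η}, ENNReal.ofReal
      (‖Ring.inverse (H - ((E : ℂ) + (η : ℝ) * Complex.I) • 1) f‖ ^ 2)) < ⊤ ↔
      ∃ ψ, (H - (E : ℂ) • 1) ψ = f := by
  constructor
  · intro hfin
    set M := ⨆ η : {η : ℝ // 0 < η}, ENNReal.ofReal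
      (‖Ring.inverse (H - ((E : ℂ) + (η : ℝ) * Complex.I) • 1) f‖ ^ 2)
    let solvable : Set ℝ :=
      {η | ∃ ψ, ‖ψ‖ ≤ √M.toReal ∧ (H - ((E : ℂ) + η * Complex.I) • 1) ψ = f}
    have hclosed : IsClosed solvable :=
      isClosed_setOf_exists_norm_le_apply_eq _ (by fun_prop) continuous_const
    have hpos : Ioi 0 ⊆ solvable := by
      intro η hη
      have hunit : IsUnit (H - ((E : ℂ) + η * Complex.I) • 1) :=
        isUnit_sub_smul_one hH (by simpa using hη.ne')
      refine ⟨Ring.inverse (H - ((E : ℂ) + η * Complex.I) • 1) f, Real.le_sqrt_of_sq_le ?_, ?_⟩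
      · exact (ENNReal.ofReal_le_iff_le_toReal hfin.ne).1
          (le_iSup (fun η : {η : ℝ // 0 < η} => ENNReal.ofReal
            (‖Ring.inverse (H - ((E : ℂ) + (η : ℝ) * Complex.I) • 1) f‖ ^ 2)) ⟨η, hη⟩)
      · exact DFunLike.congr_fun (Ring.mul_inverse_cancel _ hunit) f
    obtain ⟨ψ, -, hψ⟩ : (0 : ℝ) ∈ solvable :=
      hclosed.closure_subset_iff.2 hpos (by simp)
    exact ⟨ψ, by simpa using hψ⟩
  · rintro ⟨φ, rfl⟩
    refine (iSup_le fun η => ?_).trans_lt (ENNReal.ofReal_lt_top (r := (2 * ‖φ‖) ^ 2))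
    gcongr
    exact norm_inverse_sub_apply_le hH E η.2 φ

end Resolvent

section Potentials

variable {G : Type*} (A : ℓ²(G) →L[ℂ] ℓ²(G))

/-- The coordinate at `u` of `(A + w - z)ψ`, as a functional of `ψ ∈ ℓ²(G)`. -/
noncomputable def schrodingerCoord (w : G → ℝ) (z : ℂ) (u : G) : StrongDual ℂ ℓ²(G) :=
  lp.evalCLM ℂ (fun _ : G => ℂ) 2 u ∘L A + ((w u : ℂ) - z) • lp.evalCLM ℂ (fun _ : G => ℂ) 2 u

lemma schrodingerCoord_apply (w : G → ℝ) (z : ℂ) (u : G) (ψ : ℓ²(G)) :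
    schrodingerCoord A w z u ψ = A ψ u + (w u - z) * ψ u := rfl

lemma schrodingerCoord_update_apply [DecidableEq G] (w : G → ℝ) (z : ℂ) (y u : G) (t : ℝ)
    (ψ : ℓ²(G)) :
    schrodingerCoord A (update w y t) z u ψ =
      schrodingerCoord A (update w y 0) z u ψ + (t * ψ y) * (Pi.single y 1 : G → ℂ) u := by
  obtain rfl | hu := eq_or_ne u y
  · simp only [schrodingerCoord_apply, update_self, Pi.single_eq_same, Complex.ofReal_zero]
    ring
  · simp only [schrodingerCoord_apply, update_of_ne hu, Pi.single_eq_of_ne hu, mul_zero, add_zero]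

/-- The potentials `w` for which `f` lies in the range of `A + w - z`. The equation is imposed
coordinatewise because an unbounded `w` does not act on `ℓ²(G)`. -/
def solvablePotentials (z : ℂ) (f : G → ℂ) : Set (G → ℝ) :=
  {w | ∃ ψ, ∀ u, schrodingerCoord A w z u ψ = f u}

lemma measurableSet_solvablePotentials [Countable G] (z : ℂ) (f : G → ℂ) :
    MeasurableSet (solvablePotentials A z f) := by
  have heq : solvablePotentials A z f =
      ⋃ n : ℕ, {w | ∃ ψ, ‖ψ‖ ≤ n ∧ ∀ u, schrodingerCoord A w z u ψ = f u} := by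
    ext w
    simp only [solvablePotentials, mem_iUnion, mem_ofPred_eq]
    rw [exists_comm]
    exact exists_congr fun ψ => by simp [exists_nat_ge]
  rw [heq]
  refine .iUnion fun n => IsClosed.measurableSet ?_
  refine isClosed_setOf_exists_norm_le_forall_apply_eq _ (fun u => ?_) fun u => continuous_const
  unfold schrodingerCoord
  fun_prop

lemma hasNearlyTrivialSections_solvablePotentials [DecidableEq G] (z : ℂ) (f : G → ℂ) :
    HasNearlyTrivialSections (solvablePotentials A z f) := by
  intro w y
  let T : ℓ²(G) →ₗ[ℂ] (G → ℂ) :=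
    LinearMap.pi fun u => (schrodingerCoord A (update w y 0) z u).toLinearMap
  have hsec : update w y ⁻¹' solvablePotentials A z f =
      Complex.ofReal ⁻¹' {t : ℂ | ∃ ψ : ℓ²(G),
        T ψ + (t * lp.evalCLM ℂ (fun _ : G => ℂ) 2 y ψ) • Pi.single y 1 = f} := by
    ext t
    refine exists_congr fun ψ => (forall_congr' fun u => ?_).trans funext_iff.symm
    rw [schrodingerCoord_update_apply]
    rfl
  rw [hsec, ← preimage_compl]
  exact (subsingleton_or_compl_subsingleton_setOf_exists_add_smul_eq T
    (lp.evalCLM ℂ (fun _ : G => ℂ) 2 y).toLinearMap (Pi.single y 1) f).imp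
      (·.preimage Complex.ofReal_injective) (·.preimage Complex.ofReal_injective)

variable {A} {H : ℓ²(G) →L[ℂ] ℓ²(G)} {w : G → ℝ}

lemma isSelfAdjoint_of_apply_eq_add_mul (hA : IsSelfAdjoint A)
    (hH : ∀ ψ u, H ψ u = A ψ u + w u * ψ u) : IsSelfAdjoint H := by
  have hmul (ψ : ℓ²(G)) (u : G) : (H - A) ψ u = w u * ψ u := by simp [hH]
  have hsub : IsSelfAdjoint (H - A) := by
    refine ContinuousLinearMap.isSelfAdjoint_iff_isSymmetric.2 fun φ ψ => ?_
    simp only [ContinuousLinearMap.coe_coe, lp.inner_eq_tsum, hmul, RCLike.inner_apply, map_mul,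
      Complex.conj_ofReal]
    congr! 2
    ring
  simpa using hsub.add hA

lemma exists_sub_smul_one_apply_eq_iff (hH : ∀ ψ u, H ψ u = A ψ u + w u * ψ u) (z : ℂ)
    (f : ℓ²(G)) : (∃ ψ, (H - z • 1) ψ = f) ↔ w ∈ solvablePotentials A z f := by
  refine exists_congr fun ψ => lp.ext_iff.trans <| funext_iff.trans <| forall_congr' fun u => ?_
  have hcoord : (H - z • 1) ψ u = schrodingerCoord A w z u ψ := by
    rw [schrodingerCoord_apply, sub_mul, ← add_sub_assoc, ← hH]
    rfl
  rw [hcoord]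

end Potentials

end SimonWolff

theorem stmt1_general {G : Type*} [Countable G]
    {Ω : Type*} [MeasurableSpace Ω] (μ : Measure Ω) [IsProbabilityMeasure μ]
    (V : Ω → G → ℝ) (hVmeas : Measurable V)
    (B : Set G → MeasurableSpace Ω)
    (hB : ∀ Λ : Set G, B Λ =
      ⨆ y ∈ Λᶜ, MeasurableSpace.comap (fun ω => V ω y) inferInstance)
    (hK : ∀ f : Ω → ℝ, (∀ Λ : Finset G, Measurable[B ↑Λ] f) →
      ∃ cst : ℝ, ∀ᵐ ω ∂μ, f ω = cst)
    (hatomless : ∀ x : G,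
      ∀ᵐ b ∂(μ.map (fun ω (y : {y : G // y ≠ x}) => V ω (y : G))),
        ∀ t : ℝ,
          condDistrib (fun ω => V ω x) (fun ω (y : {y : G // y ≠ x}) => V ω (y : G)) μ b {t} = 0)
    (A : lp (fun _ : G => ℂ) 2 →L[ℂ] lp (fun _ : G => ℂ) 2) (hA : IsSelfAdjoint A)
    (H : Ω → (lp (fun _ : G => ℂ) 2 →L[ℂ] lp (fun _ : G => ℂ) 2))
    (hH : ∀ ω (ψ : lp (fun _ : G => ℂ) 2) (u : G),
      (H ω ψ : ∀ _ : G, ℂ) u = (A ψ : ∀ _ : G, ℂ) u + (V ω u : ℂ) * (ψ : ∀ _ : G, ℂ) u)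
    (f : lp (fun _ : G => ℂ) 2) (E : ℝ) :
    μ {ω | (⨆ η : {η : ℝ // 0 < η}, ENNReal.ofReal
        (‖Ring.inverse (H ω - ((E : ℂ) + (η : ℝ) * Complex.I) • 1) f‖ ^ 2)) < ⊤} = 0 ∨
      μ {ω | (⨆ η : {η : ℝ // 0 < η}, ENNReal.ofReal
        (‖Ring.inverse (H ω - ((E : ℂ) + (η : ℝ) * Complex.I) • 1) f‖ ^ 2)) < ⊤} = 1 := by
  classical
  obtain rfl : B = _ := funext hB
  have hfinite (ω : Ω) : (⨆ η : {η : ℝ // 0 < η}, ENNReal.ofReal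
      (‖Ring.inverse (H ω - ((E : ℂ) + (η : ℝ) * Complex.I) • 1) f‖ ^ 2)) < ⊤ ↔
        V ω ∈ SimonWolff.solvablePotentials A E f :=
    (SimonWolff.iSup_norm_inverse_sub_sq_lt_top_iff
      (SimonWolff.isSelfAdjoint_of_apply_eq_add_mul hA (hH ω)) E f).trans
      (SimonWolff.exists_sub_smul_one_apply_eq_iff (hH ω) E f)
  simp only [hfinite]
  have hsec := SimonWolff.hasNearlyTrivialSections_solvablePotentials A E f
  exact hsec.measure_preimage_eq_zero_or_one
    (SimonWolff.measurableSet_solvablePotentials A E f) hVmeas hK hatomless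

/-- Zero-one law (boost of the Simon–Wolff criterion): for
`H(ω) = A + V(ω)` on `ℓ²(G)` with a jointly measurable, uniformly bounded random potential
having the K-property and almost surely atomless single-site regular conditional
distributions, for every `x` and Lebesgue-almost every energy `E` the probability that
`γ_x(E) = lim_{η↓0} ‖(H(ω)-(E+iη))⁻¹δ_x‖²` (equivalently, by monotonicity, the supremum
over `η > 0`) is finite equals either `0` or `1`. -/
theorem stmt1 {G : Type*} [Countable G] [DecidableEq G]
    {Ω : Type*} [MeasurableSpace Ω] (μ : Measure Ω) [IsProbabilityMeasure μ]
    (V : Ω → G → ℝ) (hVmeas : Measurable V)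
    (C : ℝ) (hVbdd : ∀ ω u, |V ω u| ≤ C)
    (B : Set G → MeasurableSpace Ω)
    (hB : ∀ Λ : Set G, B Λ =
      ⨆ y ∈ Λᶜ, MeasurableSpace.comap (fun ω => V ω y) inferInstance)
    (hK : ∀ f : Ω → ℝ, (∀ Λ : Finset G, Measurable[B ↑Λ] f) →
      ∃ cst : ℝ, ∀ᵐ ω ∂μ, f ω = cst)
    (hatomless : ∀ x : G,
      ∀ᵐ b ∂(μ.map (fun ω (y : {y : G // y ≠ x}) => V ω (y : G))),
        ∀ t : ℝ,
          condDistrib (fun ω => V ω x) (fun ω (y : {y : G // y ≠ x}) => V ω (y : G)) μ b {t} = 0)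
    (A : lp (fun _ : G => ℂ) 2 →L[ℂ] lp (fun _ : G => ℂ) 2) (hA : IsSelfAdjoint A)
    (H : Ω → (lp (fun _ : G => ℂ) 2 →L[ℂ] lp (fun _ : G => ℂ) 2))
    (hH : ∀ ω (ψ : lp (fun _ : G => ℂ) 2) (u : G),
      (H ω ψ : ∀ _ : G, ℂ) u = (A ψ : ∀ _ : G, ℂ) u + (V ω u : ℂ) * (ψ : ∀ _ : G, ℂ) u)
    (x : G) :
    ∀ᵐ (E : ℝ) ∂(volume : Measure ℝ),
      μ {ω | (⨆ η : {η : ℝ // 0 < η}, ENNReal.ofReal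
          (‖Ring.inverse (H ω - ((E : ℂ) + (η : ℝ) * Complex.I) • 1)
            (lp.single 2 x (1:ℂ))‖ ^ 2)) < ⊤} = 0 ∨
      μ {ω | (⨆ η : {η : ℝ // 0 < η}, ENNReal.ofReal
          (‖Ring.inverse (H ω - ((E : ℂ) + (η : ℝ) * Complex.I) • 1)
            (lp.single 2 x (1:ℂ))‖ ^ 2)) < ⊤} = 1 := by
  exact .of_forall fun E =>
    stmt1_general μ V hVmeas B hB hK hatomless A hA H hH (lp.single 2 x 1) E
end

section
/- Let G be a countable set, (Ω, ℬ, ℙ) a probability space, and V : Ω → (G → ℝ) a jointly measurable, uniformly bounded random potential such that for each x ∈ G the regular conditional distribution of V(x) given the remaining variables (V(y))_{y≠x} is ℙ-almost surely atomless. Let A be a bounded self-adjoint operator on ℓ²(G), H(ω) = A + V(ω), and γ_x(E;ω) := lim_{η↓0} ‖(H(ω) − (E+iη))⁻¹ δ_x‖² ∈ (0,∞]. Then for every x ∈ G and Lebesgue-almost every E ∈ ℝ, the event {ω : γ_x(E;ω) < ∞} is measurable at infinity up to null sets: for every finite Λ ⊂ G there exists an event A_Λ in the σ-algebra ℬ_{Λᶜ}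 generated by {V(y)}_{y∈G∖Λ} whose symmetric difference with {ω : γ_x(E;ω) < ∞} has ℙ-measure zero. -/
open MeasureTheory ProbabilityTheory Filter Topology
open scoped ENNReal symmDiff

/-
For self-adjoint `T`, the norms `‖(T - (E + iη))⁻¹ f‖` stay bounded as `η ↓ 0` exactly when `f` lies
in the range of `T - E`. Hence `{γ_x(E) < ∞}` is the preimage under `V` of the set of potentials `W`
for which `(A - E + W) φ = δ_x` is solvable in `ℓ²(G)`. Changing `W` at a single site is a rank-one
perturbation, so along every coordinate line this set omits at most one point or contains at most
one point. Deciding each line in a finite set `Λ` of directions by its generic value changes the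
event only by a null set, because the single-site conditional laws have no atoms, and makes it
independent of the potential inside `Λ`.
-/

open Set Function

section CofiniteCore

variable {ι α β : Type*}

lemma eventually_iff_eventually_of_eventuallyConst {l : Filter α} [NeBot l] {p : α → Prop}
    (h : EventuallyConst p l) : ∀ᶠ a in l, (p a ↔ ∀ᶠ a' in l, p a') := by
  rcases eventuallyConst_pred.1 h with hp | hp
  · filter_upwards [hp] with a ha using iff_of_true ha hp
  · filter_upwards [hp] with a ha using iff_of_false ha (not_eventually.2 hp.frequently)

lemma eventuallyConst_eventually_cofinite [Uncountable α] {p : β → α → Prop}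
    (hleft : ∀ b, EventuallyConst (p b) cofinite)
    (hright : ∀ a, EventuallyConst (fun b => p b a) cofinite) :
    EventuallyConst (fun b => ∀ᶠ a in cofinite, p b a) cofinite := by
  by_contra hconst
  rw [eventuallyConst_pred, not_or, not_eventually, not_eventually,
    frequently_cofinite_iff_infinite, frequently_cofinite_iff_infinite] at hconst
  obtain ⟨S, hSfalse, hScount, hSinf⟩ := hconst.1.exists_subset_countable_infinite
  obtain ⟨T, hTtrue, hTcount, hTinf⟩ := hconst.2.exists_subset_countable_infinite
  have hexc : (⋃ b ∈ S ∪ T, {a | ¬(p b a ↔ ∀ᶠ a' in cofinite, p b a')}).Countable :=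
    (hScount.union hTcount).biUnion fun b _ =>
      (eventually_cofinite.1 (eventually_iff_eventually_of_eventuallyConst (hleft b))).countable
  obtain ⟨a, ha⟩ := (ne_univ_iff_exists_notMem _).1 fun h =>
    not_countable_univ (h ▸ hexc : (univ : Set α).Countable)
  simp only [mem_iUnion, mem_ofPred_eq, not_exists, not_not] at ha
  rcases eventuallyConst_pred.1 (hright a) with h | h
  · exact hSinf (h.subset fun b hb hp => hSfalse hb ((ha b (.inl hb)).1 hp))
  · exact hTinf (h.subset fun b hb hp => hp ((ha b (.inr hb)).2 (not_not.1 (hTtrue hb))))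

variable [DecidableEq ι] {F : Set (ι → α)}

/-- The property that along every coordinate line membership in `F` is constant up to finitely many
points. -/
def IsLinewiseConst (F : Set (ι → α)) : Prop :=
  ∀ w i, EventuallyConst (fun a => update w i a ∈ F) cofinite

/-- The configurations whose line in direction `i` lies in `F` up to finitely many points: the
modification of `F` that no longer depends on the coordinate `i`. -/
def cofiniteCore (F : Set (ι → α)) (i : ι) : Set (ι → α) :=
  {w | ∀ᶠ a in cofinite, update w i a ∈ F}

lemma update_mem_cofiniteCore_iff {w : ι → α} {i : ι} {a : α} :
    update w i a ∈ cofiniteCore F i ↔ w ∈ cofiniteCore F i := by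
  simp only [cofiniteCore, mem_ofPred_eq, update_idem]

lemma dependsOn_mem_cofiniteCore {s : Set ι} (hF : DependsOn (· ∈ F) s) (i : ι) :
    DependsOn (· ∈ cofiniteCore F i) (s \ {i}) := by
  intro w w' hw
  have hupdate (a : α) : (update w i a ∈ F) = (update w' i a ∈ F) := by
    refine hF fun j hj => ?_
    rcases eq_or_ne j i with rfl | hji
    · simp only [update_self]
    · simpa only [update_of_ne hji] using hw j ⟨hj, hji⟩
  simp only [cofiniteCore, mem_ofPred_eq, hupdate]

lemma IsLinewiseConst.isLinewiseConst_cofiniteCore [Uncountable α] (hF : IsLinewiseConst F)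
    (i : ι) : IsLinewiseConst (cofiniteCore F i) := by
  intro w j
  rcases eq_or_ne j i with rfl | hji
  · simpa only [update_mem_cofiniteCore_iff] using EventuallyConst.const _
  · refine eventuallyConst_eventually_cofinite (p := fun b a => update (update w j b) i a ∈ F)
      (fun b => hF _ i) fun a => ?_
    simpa only [update_comm hji] using hF (update w i a) j

variable [Infinite α]

lemma IsLinewiseConst.eventually_update_mem_iff (hF : IsLinewiseConst F) (w : ι → α) (i : ι) :
    ∀ᶠ a in cofinite, (update w i a ∈ F ↔ update w i a ∈ cofiniteCore F i) := by
  simp only [update_mem_cofiniteCore_iff]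
  exact eventually_iff_eventually_of_eventuallyConst (hF w i)

lemma IsLinewiseConst.measurableSet_cofiniteCore [MeasurableSpace α] (hF : IsLinewiseConst F)
    (hFm : MeasurableSet F) (i : ι) : MeasurableSet (cofiniteCore F i) := by
  let e : ℕ ↪ α := Infinite.natEmbedding α
  have he : Tendsto e atTop cofinite := Nat.cofinite_eq_atTop ▸ e.injective.tendsto_cofinite
  -- By constancy up to finitely many points, a line is decided along any injective sequence.
  have hseq : cofiniteCore F i = {w | ∀ᶠ n in atTop, update w i (e n) ∈ F} := by
    ext w
    have hgeneric := he.eventually (eventually_iff_eventually_of_eventuallyConst (hF w i))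
    exact eventually_const.symm.trans (eventually_congr hgeneric).symm
  simp only [hseq, eventually_atTop, ofPred_exists, ofPred_forall]
  exact .iUnion fun N => .iInter fun n => .iInter fun _ => measurable_update_left hFm

end CofiniteCore

lemma measurableSet_cylinderEvents_of_dependsOn {ι : Type*} {X : ι → Type*}
    [∀ i, MeasurableSpace (X i)] {F : Set (∀ i, X i)} {s : Set ι} (hF : DependsOn (· ∈ F) s)
    (hFm : MeasurableSet F) : MeasurableSet[cylinderEvents s] F := by
  classical
  rcases F.eq_empty_or_nonempty with rfl | ⟨w₀, -⟩
  · exact @MeasurableSet.empty _ (cylinderEvents s)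
  have hpiecewise : Measurable[cylinderEvents s] fun w : ∀ i, X i => s.piecewise w w₀ := by
    refine @measurable_pi_lambda _ _ _ (cylinderEvents s) _ _ fun i => ?_
    by_cases hi : i ∈ s
    · simpa only [piecewise_eq_of_mem s _ _ hi] using measurable_cylinderEvent_apply hi
    · simpa only [piecewise_eq_of_notMem s _ _ hi] using measurable_const
  have hpreimage : F = (fun w => s.piecewise w w₀) ⁻¹' F := by
    ext w
    exact (hF fun i hi => (piecewise_eq_of_mem s w w₀ hi).symm).to_iff
  exact hpreimage ▸ hpiecewise hFm

section Atomless

variable {Ω β α : Type*} [MeasurableSpace Ω] [MeasurableSpace β] [MeasurableSpace α]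
  [StandardBorelSpace α] [Nonempty α] {μ : Measure Ω} [IsFiniteMeasure μ]

/-- The property that the regular conditional distribution of `Y` given `X` is almost surely
atomless. -/
def HasAtomlessCondDistrib (Y : Ω → α) (X : Ω → β) (μ : Measure Ω) [IsFiniteMeasure μ] : Prop :=
  ∀ᵐ b ∂μ.map X, ∀ a, condDistrib Y X μ b {a} = 0

lemma HasAtomlessCondDistrib.ae_notMem {Y : Ω → α} {X : Ω → β}
    (h : HasAtomlessCondDistrib Y X μ) (hX : AEMeasurable X μ) (hY : AEMeasurable Y μ)
    {N : Set (β × α)} (hN : MeasurableSet N) (hNc : ∀ b, (Prod.mk b ⁻¹' N).Countable) :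
    ∀ᵐ ω ∂μ, (X ω, Y ω) ∉ N := by
  refine ae_of_ae_map (p := (· ∉ N)) (hX.prodMk hY) ?_
  rw [← measure_eq_zero_iff_ae_notMem, ← compProd_map_condDistrib hY, Measure.compProd_apply hN,
    lintegral_eq_zero_iff (Kernel.measurable_kernel_prodMk_left hN)]
  filter_upwards [h] with b hb
  have : NullSingletonClass (condDistrib Y X μ b) := ⟨hb⟩
  exact (hNc b).measure_zero _

variable {ι : Type*} [DecidableEq ι] {V : Ω → ι → α} {F : Set (ι → α)}

lemma IsLinewiseConst.ae_mem_cofiniteCore_iff [Infinite α] (hF : IsLinewiseConst F)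
    (hFm : MeasurableSet F) (hV : Measurable V) {i : ι}
    (hat : HasAtomlessCondDistrib (V · i) (fun ω (j : {j // j ≠ i}) => V ω j) μ) :
    ∀ᵐ ω ∂μ, (V ω ∈ cofiniteCore F i ↔ V ω ∈ F) := by
  let X : Ω → {j // j ≠ i} → α := fun ω j => V ω j
  have X_measurable : Measurable X := by fun_prop
  let glue : ({j // j ≠ i} → α) × α → ι → α := fun p => (Equiv.funSplitAt i α).symm p.swap
  have glue_measurable : Measurable glue := by
    refine measurable_pi_lambda _ fun j => ?_
    by_cases hj : j = i <;>
      simp only [glue, Equiv.funSplitAt_symm_apply, hj, dite_true, dite_false] <;> fun_prop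
  have glue_self (ω : Ω) : glue (X ω, V ω i) = V ω := (Equiv.funSplitAt i α).symm_apply_apply (V ω)
  have glue_eq_update (b : {j // j ≠ i} → α) (a₀ a : α) :
      glue (b, a) = update (glue (b, a₀)) i a := by
    ext j
    by_cases hj : j = i <;> simp [glue, hj]
  have hcore := glue_measurable (hF.measurableSet_cofiniteCore hFm i)
  have hae := hat.ae_notMem (N := {p | ¬(glue p ∈ cofiniteCore F i ↔ glue p ∈ F)})
    (X_measurable.aemeasurable) (by fun_prop) (hcore.iff (glue_measurable hFm)).compl fun b => by
      obtain ⟨a₀⟩ := ‹Nonempty α›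
      have hfin := eventually_cofinite.1 (hF.eventually_update_mem_iff (glue (b, a₀)) i)
      simpa only [← glue_eq_update, iff_comm, preimage_ofPred_eq] using hfin.countable
  filter_upwards [hae] with ω hω
  simpa only [mem_ofPred_eq, not_not, X, glue_self] using hω

lemma IsLinewiseConst.exists_measurableSet_cylinderEvents_ae_eq [Uncountable α]
    (hF : IsLinewiseConst F) (hFm : MeasurableSet F) (hV : Measurable V)
    (hat : ∀ i, HasAtomlessCondDistrib (V · i) (fun ω (j : {j // j ≠ i}) => V ω j) μ)
    (s : Finset ι) :
    ∃ F' : Set (ι → α), MeasurableSet[cylinderEvents (s : Set ι)ᶜ] F' ∧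
      V ⁻¹' F' =ᵐ[μ] V ⁻¹' F := by
  suffices ∃ F' : Set (ι → α), IsLinewiseConst F' ∧ MeasurableSet F' ∧
      DependsOn (· ∈ F') (s : Set ι)ᶜ ∧ V ⁻¹' F' =ᵐ[μ] V ⁻¹' F by
    obtain ⟨F', -, hF'm, hF'dep, hF'ae⟩ := this
    exact ⟨F', measurableSet_cylinderEvents_of_dependsOn hF'dep hF'm, hF'ae⟩
  induction s using Finset.induction_on with
  | empty => exact ⟨F, hF, hFm, by simpa using dependsOn_univ (· ∈ F), .rfl⟩
  | insert i s _ ih =>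
    obtain ⟨F', hF', hF'm, hF'dep, hF'ae⟩ := ih
    refine ⟨cofiniteCore F' i, hF'.isLinewiseConst_cofiniteCore i,
      hF'.measurableSet_cofiniteCore hF'm i, ?_, ?_⟩
    · exact (dependsOn_mem_cofiniteCore hF'dep i).mono fun j hj => by
        simpa [mem_compl_iff, and_comm] using hj
    · exact (hF'.ae_mem_cofiniteCore_iff hF'm hV (hat i)).set_eq.trans hF'ae

end Atomless

section RankOne

variable {K M N : Type*} [Field K] [AddCommGroup M] [Module K M] [AddCommGroup N] [Module K N]
  {T : M →ₗ[K] N} {ℓ : M →ₗ[K] K} {e f : N} {s : K}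

lemma add_smul_smulRight_apply (T : M →ₗ[K] N) (ℓ : M →ₗ[K] K) (e : N) (s t : K) (φ : M) :
    (T + t • ℓ.smulRight e) φ = (T + s • ℓ.smulRight e) φ + ((t - s) * ℓ φ) • e := by
  simp only [LinearMap.add_apply, LinearMap.smul_apply, LinearMap.smulRight_apply]
  module

lemma subsingleton_notMem_range_add_smul_smulRight
    (he : e ∈ (T + s • ℓ.smulRight e).range) :
    {t : K | e ∉ (T + t • ℓ.smulRight e).range}.Subsingleton := by
  obtain ⟨φ, hφ⟩ := he
  have hscalar (t : K) (ht : e ∉ (T + t • ℓ.smulRight e).range) : 1 + (t - s) * ℓ φ = 0 := by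
    have happly : (T + t • ℓ.smulRight e) φ = (1 + (t - s) * ℓ φ) • e := by
      rw [add_smul_smulRight_apply T ℓ e s t φ, hφ, add_smul, one_smul]
    by_contra hne
    exact ht ((Submodule.smul_mem_iff _ hne).1 (happly ▸ LinearMap.mem_range_self _ φ))
  intro a ha b hb
  have hmul : (a - b) * ℓ φ = 0 := by linear_combination hscalar a ha - hscalar b hb
  have hℓφ : ℓ φ ≠ 0 := fun h => by simpa [h] using hscalar a ha
  exact sub_eq_zero.1 ((mul_eq_zero.1 hmul).resolve_right hℓφ)

lemma mem_range_add_smul_smulRight_of_mem {t : K} (hf : f ∈ (T + s • ℓ.smulRight e).range)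
    (he : e ∈ (T + t • ℓ.smulRight e).range) : f ∈ (T + t • ℓ.smulRight e).range := by
  obtain ⟨φ, hφ⟩ := hf
  have happly := add_smul_smulRight_apply T ℓ e s t φ
  rw [hφ, ← sub_eq_iff_eq_add] at happly
  exact happly ▸ Submodule.sub_mem _ (LinearMap.mem_range_self _ φ) (Submodule.smul_mem _ _ he)

lemma forall_mem_range_or_mem_range_of_ne {t : K} (hst : s ≠ t)
    (hs : f ∈ (T + s • ℓ.smulRight e).range) (ht : f ∈ (T + t • ℓ.smulRight e).range) :
    (∀ r : K, f ∈ (T + r • ℓ.smulRight e).range) ∨ e ∈ (T + t • ℓ.smulRight e).range := by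
  obtain ⟨φ, hφ⟩ := hs
  by_cases hℓφ : ℓ φ = 0
  · refine .inl fun r => ⟨φ, ?_⟩
    rw [add_smul_smulRight_apply T ℓ e s r φ, hφ, hℓφ, mul_zero, zero_smul, add_zero]
  · refine .inr ((Submodule.smul_mem_iff _ (mul_ne_zero (sub_ne_zero.2 hst.symm) hℓφ)).1 ?_)
    have happly := add_smul_smulRight_apply T ℓ e s t φ
    rw [hφ, ← sub_eq_iff_eq_add'] at happly
    exact happly ▸ Submodule.sub_mem _ (LinearMap.mem_range_self _ φ) ht

theorem subsingleton_mem_range_or_subsingleton_notMem_range (T : M →ₗ[K] N) (ℓ : M →ₗ[K] K)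
    (e f : N) :
    {t : K | f ∈ (T + t • ℓ.smulRight e).range}.Subsingleton ∨
      {t : K | f ∉ (T + t • ℓ.smulRight e).range}.Subsingleton := by
  refine or_iff_not_imp_left.2 fun hnot => ?_
  obtain ⟨s, hs, t, ht, hst⟩ := not_subsingleton_iff.1 hnot
  rcases forall_mem_range_or_mem_range_of_ne hst hs ht with hall | he
  · exact fun a ha => absurd (hall a) ha
  · exact (subsingleton_notMem_range_add_smul_smulRight he).anti fun r hr her =>
      hr (mem_range_add_smul_smulRight_of_mem ht her)

end RankOne

section WeakCompactness

variable {𝕜 E X : Type*} [RCLike 𝕜] [NormedAddCommGroup E] [TopologicalSpace X]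

lemma continuous_eval_weakDual_closedBall [NormedSpace 𝕜 E] (M : ℝ) :
    Continuous fun p : E × (WeakDual.toStrongDual (𝕜 := 𝕜) (E := E) ⁻¹' Metric.closedBall 0 M) =>
      p.2.1 p.1 := by
  refine continuous_iff_continuousAt.2 fun ⟨v₀, l₀⟩ => ?_
  have heval : Continuous fun p : E × (WeakDual.toStrongDual (𝕜 := 𝕜) (E := E) ⁻¹'
      Metric.closedBall 0 M) => p.2.1 v₀ :=
    (WeakDual.eval_continuous v₀).comp (continuous_subtype_val.comp continuous_snd)
  have hdiff : Tendsto (fun p : E × (WeakDual.toStrongDual (𝕜 := 𝕜) (E := E) ⁻¹'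
      Metric.closedBall 0 M) => p.2.1 (p.1 - v₀)) (𝓝 (v₀, l₀)) (𝓝 0) := by
    refine squeeze_zero_norm (a := fun p => M * ‖p.1 - v₀‖) (fun p => ?_) ?_
    · exact ContinuousLinearMap.le_of_opNorm_le (WeakDual.toStrongDual p.2.1)
        (mem_closedBall_zero_iff.1 p.2.2) _
    · exact (by fun_prop : Continuous fun p : E × (WeakDual.toStrongDual (𝕜 := 𝕜) (E := E) ⁻¹'
        Metric.closedBall 0 M) => M * ‖p.1 - v₀‖).tendsto' _ _ (by simp)
  simpa [ContinuousAt] using hdiff.add (heval.tendsto (v₀, l₀))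

lemma isClosed_exists_norm_le_forall_dual_apply_eq [NormedSpace 𝕜 E] {ι : Type*} {v : ι → X → E}
    {c : ι → X → 𝕜} (hv : ∀ i, Continuous (v i)) (hc : ∀ i, Continuous (c i)) (M : ℝ) :
    IsClosed {x | ∃ l : StrongDual 𝕜 E, ‖l‖ ≤ M ∧ ∀ i, l (v i x) = c i x} := by
  let B : Set (WeakDual 𝕜 E) := WeakDual.toStrongDual ⁻¹' Metric.closedBall 0 M
  have : CompactSpace B := isCompact_iff_compactSpace.1 (WeakDual.isCompact_closedBall 0 M)
  have hclosed : IsClosed {p : X × B | ∀ i, p.2.1 (v i p.1) = c i p.1} := by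
    simp only [ofPred_forall]
    exact isClosed_iInter fun i => isClosed_eq
      ((continuous_eval_weakDual_closedBall M).comp
        (((hv i).comp continuous_fst).prodMk continuous_snd)) ((hc i).comp continuous_fst)
  convert isClosedMap_fst_of_compactSpace _ hclosed using 1
  ext x
  constructor
  · rintro ⟨l, hl, h⟩
    exact ⟨(x, ⟨StrongDual.toWeakDual l, mem_closedBall_zero_iff.2 hl⟩), h, rfl⟩
  · rintro ⟨⟨x, l, hl⟩, h, rfl⟩
    exact ⟨WeakDual.toStrongDual l, mem_closedBall_zero_iff.1 hl, h⟩

variable [InnerProductSpace 𝕜 E] [CompleteSpace E]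

lemma isClosed_exists_norm_le_forall_apply_eq {ι : Type*} {L : ι → X → StrongDual 𝕜 E}
    {c : ι → X → 𝕜} (hL : ∀ i, Continuous (L i)) (hc : ∀ i, Continuous (c i)) (M : ℝ) :
    IsClosed {x | ∃ φ : E, ‖φ‖ ≤ M ∧ ∀ i, L i x φ = c i x} := by
  let J := InnerProductSpace.toDual 𝕜 E
  have hclosed := isClosed_exists_norm_le_forall_dual_apply_eq (𝕜 := 𝕜)
    (v := fun i x => J.symm (L i x)) (c := fun i x => star (c i x))
    (fun i => J.symm.continuous.comp (hL i)) (fun i => continuous_star.comp (hc i)) M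
  have hriesz (φ : E) (l : StrongDual 𝕜 E) : J φ (J.symm l) = star (l φ) := by
    rw [InnerProductSpace.toDual_apply_apply, ← inner_conj_symm,
      InnerProductSpace.toDual_symm_apply]
    rfl
  convert hclosed using 1
  ext x
  simp only [mem_ofPred_eq, J.surjective.exists, J.norm_map, hriesz, star_inj]

lemma isClosed_exists_norm_le_apply_eq {F : Type*} [NormedAddCommGroup F] [NormedSpace 𝕜 F]
    {T : X → E →L[𝕜] F} {f : X → F} (hT : Continuous T) (hf : Continuous f) (M : ℝ) :
    IsClosed {x | ∃ φ : E, ‖φ‖ ≤ M ∧ T x φ = f x} := by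
  have hweak := isClosed_exists_norm_le_forall_apply_eq (𝕜 := 𝕜) (E := E)
    (L := fun (l : StrongDual 𝕜 F) x => l.comp (T x)) (c := fun l x => l (f x))
    (fun l => by fun_prop) (fun l => by fun_prop) M
  simpa only [ContinuousLinearMap.comp_apply, ← SeparatingDual.eq_iff_forall_dual_eq] using hweak

end WeakCompactness

section Resolvent

variable {F : Type*} [NormedAddCommGroup F] [InnerProductSpace ℂ F] [CompleteSpace F]
  {T : F →L[ℂ] F}

lemma abs_im_mul_norm_le_norm_sub_smul_one_apply (hT : IsSelfAdjoint T) (z : ℂ) (v : F) :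
    |z.im| * ‖v‖ ≤ ‖(T - z • 1) v‖ := by
  rcases eq_or_ne v 0 with rfl | hv
  · simp
  have him : (inner ℂ v ((T - z • 1) v)).im = -(z.im * ‖v‖ ^ 2) := by
    have hreal : (inner ℂ v (T v)).im = 0 := hT.isSymmetric.im_inner_self_apply v
    rw [sub_apply, smul_apply, one_apply_eq_self, inner_sub_right, inner_smul_right,
      inner_self_eq_norm_sq_to_K, Complex.sub_im, hreal]
    simp [← Complex.ofReal_pow]
  refine le_of_mul_le_mul_left ?_ (norm_pos_iff.2 hv)
  calc ‖v‖ * (|z.im| * ‖v‖) = |(inner ℂ v ((T - z • 1) v)).im| := by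
        rw [him, abs_neg, abs_mul, abs_of_nonneg (sq_nonneg ‖v‖)]; ring
    _ ≤ ‖(inner ℂ v ((T - z • 1) v) : ℂ)‖ := Complex.abs_im_le_norm _
    _ ≤ ‖v‖ * ‖(T - z • 1) v‖ := norm_inner_le_norm _ _

lemma sub_smul_one_inverse_apply (hT : IsSelfAdjoint T) {z : ℂ} (hz : z.im ≠ 0)
    (f : F) : (T - z • 1) (Ring.inverse (T - z • 1) f) = f := by
  have hunit : IsUnit (T - z • 1) := by
    have hspec : z ∉ spectrum ℂ T := fun h => hz (hT.im_eq_zero_of_mem_spectrum h)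
    rw [spectrum.notMem_iff, Algebra.algebraMap_eq_smul_one] at hspec
    exact neg_sub (z • 1) T ▸ hspec.neg
  rw [← mul_apply_eq_comp, Ring.mul_inverse_cancel _ hunit, one_apply_eq_self]

lemma mem_range_of_forall_norm_inverse_le (hT : IsSelfAdjoint T) {E M : ℝ} {f : F}
    (hM : ∀ η : ℝ, 0 < η → ‖Ring.inverse (T - ((E : ℂ) + η * Complex.I) • 1) f‖ ≤ M) :
    f ∈ (T - (E : ℂ) • 1).range := by
  have hclosed : IsClosed {η : ℝ | ∃ φ, ‖φ‖ ≤ M ∧ (T - ((E : ℂ) + η * Complex.I) • 1) φ = f} :=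
    isClosed_exists_norm_le_apply_eq (by fun_prop) continuous_const M
  have hpos : Ioi (0 : ℝ) ⊆ {η | ∃ φ, ‖φ‖ ≤ M ∧ (T - ((E : ℂ) + η * Complex.I) • 1) φ = f} :=
    fun η hη => ⟨_, hM η hη, sub_smul_one_inverse_apply hT (by simpa using ne_of_gt hη) f⟩
  obtain ⟨φ, -, hφ⟩ := closure_minimal hpos hclosed (closure_Ioi (0 : ℝ) ▸ self_mem_Ici)
  exact ⟨φ, by simpa using hφ⟩

lemma norm_inverse_sub_smul_one_apply_le (hT : IsSelfAdjoint T) {z : ℂ}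
    (hz : z.im ≠ 0) (φ : F) :
    ‖Ring.inverse (T - z • 1) ((T - (z.re : ℂ) • 1) φ)‖ ≤ 2 * ‖φ‖ := by
  set ψ := Ring.inverse (T - z • 1) ((T - (z.re : ℂ) • 1) φ) with hψ
  have hdiff : (T - z • 1) (ψ - φ) = (z.im * Complex.I) • φ := by
    rw [map_sub, hψ, sub_smul_one_inverse_apply hT hz,
      ← sub_eq_iff_eq_add'.2 (Complex.re_add_im z).symm]
    simp only [sub_apply, smul_apply, one_apply_eq_self]
    module
  have hnorm : |z.im| * ‖ψ - φ‖ ≤ |z.im| * ‖φ‖ := by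
    simpa [hdiff, norm_smul] using abs_im_mul_norm_le_norm_sub_smul_one_apply hT z (ψ - φ)
  have hle : ‖ψ - φ‖ ≤ ‖φ‖ := le_of_mul_le_mul_left hnorm (abs_pos.2 hz)
  linarith [norm_sub_norm_le ψ φ]

lemma iSup_ofReal_norm_sq_lt_top_iff {ι E : Type*} [SeminormedAddCommGroup E] {g : ι → E} :
    (⨆ i, ENNReal.ofReal (‖g i‖ ^ 2)) < ⊤ ↔ ∃ M, ∀ i, ‖g i‖ ≤ M := by
  constructor
  · intro h
    refine ⟨√(⨆ i, ENNReal.ofReal (‖g i‖ ^ 2)).toReal, fun i => Real.le_sqrt_of_sq_le ?_⟩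
    exact (ENNReal.ofReal_le_iff_le_toReal h.ne).1
      (le_iSup (fun i => ENNReal.ofReal (‖g i‖ ^ 2)) i)
  · rintro ⟨M, hM⟩
    refine (iSup_le fun i => ?_).trans_lt (ENNReal.ofReal_lt_top (r := M ^ 2))
    exact ENNReal.ofReal_le_ofReal (pow_le_pow_left₀ (norm_nonneg _) (hM i) 2)

theorem iSup_norm_inverse_sq_lt_top_iff_mem_range (hT : IsSelfAdjoint T) (E : ℝ) (f : F) :
    (⨆ η : {η : ℝ // 0 < η}, ENNReal.ofReal
      (‖Ring.inverse (T - ((E : ℂ) + (η : ℝ) * Complex.I) • 1) f‖ ^ 2)) < ⊤ ↔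
      f ∈ (T - (E : ℂ) • 1).range := by
  rw [iSup_ofReal_norm_sq_lt_top_iff]
  constructor
  · rintro ⟨M, hM⟩
    exact mem_range_of_forall_norm_inverse_le hT fun η hη => hM ⟨η, hη⟩
  · rintro ⟨φ, rfl⟩
    refine ⟨2 * ‖φ‖, fun η => ?_⟩
    simpa using norm_inverse_sub_smul_one_apply_le hT (z := E + (η : ℝ) * Complex.I)
      (by simpa using η.2.ne') φ

end Resolvent

section Schrodinger

variable {G : Type*} {A H : lp (fun _ : G => ℂ) 2 →L[ℂ] lp (fun _ : G => ℂ) 2} {W : G → ℝ}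

/-- The Schrödinger operator `A + W` on `ℓ²(G)`. It takes values in all functions on `G`, so that
the potential `W` may be unbounded. -/
noncomputable def formalSchrodinger (A : lp (fun _ : G => ℂ) 2 →L[ℂ] lp (fun _ : G => ℂ) 2)
    (W : G → ℝ) : lp (fun _ : G => ℂ) 2 →ₗ[ℂ] G → ℂ where
  toFun φ u := A φ u + W u * φ u
  map_add' φ ψ := by
    ext u
    simp only [map_add, lp.coeFn_add, Pi.add_apply]
    ring
  map_smul' c φ := by
    ext u
    simp only [map_smul, lp.coeFn_smul, Pi.smul_apply, smul_eq_mul, RingHom.id_apply]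
    ring

@[simp]
lemma formalSchrodinger_apply (φ : lp (fun _ : G => ℂ) 2) (u : G) :
    formalSchrodinger A W φ u = A φ u + W u * φ u := rfl

lemma measurableSet_mem_range_formalSchrodinger [Countable G]
    (A : lp (fun _ : G => ℂ) 2 →L[ℂ] lp (fun _ : G => ℂ) 2) (f : G → ℂ) :
    MeasurableSet {W | f ∈ (formalSchrodinger A W).range} := by
  let ev (u : G) : StrongDual ℂ (lp (fun _ : G => ℂ) 2) := lp.evalCLM ℂ (fun _ : G => ℂ) 2 u
  have hunion : {W | f ∈ (formalSchrodinger A W).range} =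
      ⋃ n : ℕ, {W | ∃ φ, ‖φ‖ ≤ n ∧ ∀ u, ((ev u).comp A + (W u : ℂ) • ev u) φ = f u} := by
    ext W
    simp only [LinearMap.mem_range, funext_iff, mem_iUnion, mem_ofPred_eq]
    rw [exists_comm]
    exact exists_congr fun φ => ⟨fun h => (exists_nat_ge ‖φ‖).imp fun n hn => ⟨hn, h⟩,
      fun ⟨_, _, h⟩ => h⟩
  rw [hunion]
  exact .iUnion fun n => (isClosed_exists_norm_le_forall_apply_eq (fun u => by fun_prop)
    (fun _ => continuous_const) n).measurableSet

lemma isSelfAdjoint_of_forall_apply_eq (hA : IsSelfAdjoint A)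
    (hH : ∀ (ψ : lp (fun _ : G => ℂ) 2) (u : G), H ψ u = A ψ u + W u * ψ u) :
    IsSelfAdjoint H := by
  have hpotential (ψ : lp (fun _ : G => ℂ) 2) (u : G) : (H - A) ψ u = W u * ψ u := by
    rw [sub_apply, lp.coeFn_sub, Pi.sub_apply, hH, add_sub_cancel_left]
  suffices IsSelfAdjoint (H - A) by simpa using this.add hA
  rw [ContinuousLinearMap.isSelfAdjoint_iff_isSymmetric]
  intro φ ψ
  change inner ℂ ((H - A) φ) ψ = inner ℂ φ ((H - A) ψ)
  simp only [lp.inner_eq_tsum, hpotential, RCLike.inner_apply, map_mul, Complex.conj_ofReal]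
  exact tsum_congr fun u => by ring

variable [DecidableEq G]

lemma formalSchrodinger_update (W : G → ℝ) (y : G) (t : ℝ) :
    formalSchrodinger A (update W y t) = formalSchrodinger A W +
      ((t - W y : ℝ) : ℂ) • (lp.evalₗ (𝕜 := ℂ) (fun _ : G => ℂ) 2 y).smulRight (Pi.single y 1) := by
  ext φ u
  rcases eq_or_ne u y with rfl | hu
  · simp only [formalSchrodinger_apply, update_self, Complex.ofReal_sub, LinearMap.add_apply,
      LinearMap.smul_apply, LinearMap.coe_smulRight, lp.evalₗ_apply, Pi.add_apply, Pi.smul_apply,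
      Pi.single_eq_same, smul_eq_mul, mul_one]
    ring
  · simp [hu]

lemma isLinewiseConst_mem_range_formalSchrodinger
    (A : lp (fun _ : G => ℂ) 2 →L[ℂ] lp (fun _ : G => ℂ) 2) (f : G → ℂ) :
    IsLinewiseConst {W | f ∈ (formalSchrodinger A W).range} := by
  intro W y
  have hinj : Injective fun t : ℝ => ((t - W y : ℝ) : ℂ) :=
    Complex.ofReal_injective.comp sub_left_injective
  simp only [mem_ofPred_eq, formalSchrodinger_update, eventuallyConst_pred, eventually_cofinite,
    not_not]
  exact (subsingleton_mem_range_or_subsingleton_notMem_range _ _ _ f).symm.imp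
    (fun h => (h.preimage hinj).finite) fun h => (h.preimage hinj).finite

lemma single_mem_range_sub_smul_one_iff
    (hH : ∀ (ψ : lp (fun _ : G => ℂ) 2) (u : G), H ψ u = A ψ u + W u * ψ u) (z : ℂ) (x : G)
    (c : ℂ) :
    lp.single 2 x c ∈ (H - z • 1).range ↔
      Pi.single x c ∈ (formalSchrodinger (A - z • 1) W).range := by
  refine exists_congr fun φ => ?_
  have hcoe : ⇑((H - z • 1) φ) = formalSchrodinger (A - z • 1) W φ := by
    ext u
    simp only [formalSchrodinger_apply, sub_apply, smul_apply, one_apply_eq_self, lp.coeFn_sub,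
      lp.coeFn_smul, Pi.sub_apply, Pi.smul_apply, hH]
    ring
  exact lp.ext_iff.trans (by rw [← hcoe, lp.coeFn_single]; rfl)

end Schrodinger

theorem stmt2_general {G : Type*} [Countable G] [DecidableEq G]
    {Ω : Type*} [MeasurableSpace Ω] (μ : Measure Ω) [IsFiniteMeasure μ]
    (V : Ω → G → ℝ) (hVmeas : Measurable V)
    (B : Set G → MeasurableSpace Ω)
    (hB : ∀ Λ : Set G, B Λ =
      ⨆ y ∈ Λᶜ, MeasurableSpace.comap (fun ω => V ω y) inferInstance)
    (hatomless : ∀ x : G,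
      HasAtomlessCondDistrib (fun ω => V ω x) (fun ω (y : {y : G // y ≠ x}) => V ω y) μ)
    (A : lp (fun _ : G => ℂ) 2 →L[ℂ] lp (fun _ : G => ℂ) 2) (hA : IsSelfAdjoint A)
    (H : Ω → (lp (fun _ : G => ℂ) 2 →L[ℂ] lp (fun _ : G => ℂ) 2))
    (hH : ∀ ω (ψ : lp (fun _ : G => ℂ) 2) (u : G), H ω ψ u = A ψ u + V ω u * ψ u)
    (x : G) (E : ℝ) (Λ : Finset G) :
    ∃ AΛ : Set Ω, MeasurableSet[B ↑Λ] AΛ ∧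
      μ (AΛ ∆ {ω | (⨆ η : {η : ℝ // 0 < η}, ENNReal.ofReal
        (‖Ring.inverse (H ω - ((E : ℂ) + (η : ℝ) * Complex.I) • 1)
          (lp.single 2 x (1:ℂ))‖ ^ 2)) < ⊤}) = 0 := by
  let F : Set (G → ℝ) := {W | Pi.single x 1 ∈ (formalSchrodinger (A - (E : ℂ) • 1) W).range}
  obtain ⟨F', hF'm, hF'ae⟩ :=
    (isLinewiseConst_mem_range_formalSchrodinger _ _).exists_measurableSet_cylinderEvents_ae_eq
      (measurableSet_mem_range_formalSchrodinger _ _) hVmeas hatomless (F := F) Λ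
  have hB_eq_comap : B Λ = (cylinderEvents (Λ : Set G)ᶜ).comap V := by
    simp only [hB, cylinderEvents, MeasurableSpace.comap_iSup, MeasurableSpace.comap_comp]
    rfl
  have hevent (ω : Ω) : (⨆ η : {η : ℝ // 0 < η}, ENNReal.ofReal
      (‖Ring.inverse (H ω - ((E : ℂ) + (η : ℝ) * Complex.I) • 1)
        (lp.single 2 x (1:ℂ))‖ ^ 2)) < ⊤ ↔ V ω ∈ F :=
    (iSup_norm_inverse_sq_lt_top_iff_mem_range
      (isSelfAdjoint_of_forall_apply_eq hA (hH ω)) E _).trans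
      (single_mem_range_sub_smul_one_iff (hH ω) E x 1)
  refine ⟨V ⁻¹' F', hB_eq_comap ▸ ⟨F', hF'm, rfl⟩, ?_⟩
  simp only [hevent]
  exact measure_symmDiff_eq_zero_iff.2 hF'ae

/-- Measurability at infinity of the Simon–Wolff event: for
`H(ω) = A + V(ω)` on `ℓ²(G)` with a jointly measurable, uniformly bounded random potential
whose single-site regular conditional distributions are almost surely atomless, for every
`x` and Lebesgue-almost every energy `E`, the event `{γ_x(E) < ∞}` (with
`γ_x(E) = lim_{η↓0} ‖(H(ω)-(E+iη))⁻¹δ_x‖²`, i.e. the supremum over `η > 0`) agrees, up to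
a `ℙ`-null symmetric difference, with an event in the σ-algebra generated by the potential
outside any prescribed finite set `Λ`. -/
theorem stmt2 {G : Type*} [Countable G] [DecidableEq G]
    {Ω : Type*} [MeasurableSpace Ω] (μ : Measure Ω) [IsProbabilityMeasure μ]
    (V : Ω → G → ℝ) (hVmeas : Measurable V)
    (C : ℝ) (hVbdd : ∀ ω u, |V ω u| ≤ C)
    (B : Set G → MeasurableSpace Ω)
    (hB : ∀ Λ : Set G, B Λ =
      ⨆ y ∈ Λᶜ, MeasurableSpace.comap (fun ω => V ω y) inferInstance)
    (hatomless : ∀ x : G,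
      ∀ᵐ b ∂(μ.map (fun ω (y : {y : G // y ≠ x}) => V ω (y : G))),
        ∀ t : ℝ,
          condDistrib (fun ω => V ω x) (fun ω (y : {y : G // y ≠ x}) => V ω (y : G)) μ b {t} = 0)
    (A : lp (fun _ : G => ℂ) 2 →L[ℂ] lp (fun _ : G => ℂ) 2) (hA : IsSelfAdjoint A)
    (H : Ω → (lp (fun _ : G => ℂ) 2 →L[ℂ] lp (fun _ : G => ℂ) 2))
    (hH : ∀ ω (ψ : lp (fun _ : G => ℂ) 2) (u : G),
      (H ω ψ : ∀ _ : G, ℂ) u = (A ψ : ∀ _ : G, ℂ) u + (V ω u : ℂ) * (ψ : ∀ _ : G, ℂ) u)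
    (x : G) :
    ∀ᵐ (E : ℝ) ∂(volume : Measure ℝ), ∀ Λ : Finset G,
      ∃ AΛ : Set Ω, MeasurableSet[B ↑Λ] AΛ ∧
        μ (AΛ ∆ {ω | (⨆ η : {η : ℝ // 0 < η}, ENNReal.ofReal
          (‖Ring.inverse (H ω - ((E : ℂ) + (η : ℝ) * Complex.I) • 1)
            (lp.single 2 x (1:ℂ))‖ ^ 2)) < ⊤}) = 0 :=
  ae_of_all _ fun E Λ => stmt2_general μ V hVmeas B hB hatomless A hA H hH x E Λ
end

section
/- Let G be a countable set, A a bounded self-adjoint operator on ℓ²(G), (Ω, ℬ, ℙ) a probability space, and V : Ω → (G → ℝ) a jointly measurable, uniformly bounded random potential such that for each x ∈ G the regular conditional distribution of V(x) given the remaining variables (V(y))_{y≠x} is ℙ-almost surely absolutely continuous with respect to Lebesgue measure. Let H(ω) = A + V(ω), and γ_x(E;ω) := lim_{η↓0} ‖(H(ω) − (E+iη))⁻¹ δ_x‖² ∈ (0,∞]. Let I ⊂ ℝ be a Borel set and assume that for every x ∈ G, for Lebesgue-almost every E ∈ I and ℙ-almost every ω, γ_x(E;ω) = ∞. Then ℙ-almost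 surely H(ω) has no eigenvalues in I: for ℙ-almost every ω, for every E ∈ I, ker(H(ω) − E) = {0}. -/
open MeasureTheory ProbabilityTheory Filter Topology
open scoped ENNReal

/-!
Fix a site `x`, and let `P` be the orthogonal projection onto `ℂ δ_x`. If `φ` is an eigenvector of
`H + tP` with eigenvalue `E`, normalized by `φ x = 1`, and `t ≠ 0`, then `-t⁻¹ φ` solves
`(H - E) ψ = δ_x`. Such a `ψ` dominates `‖(H - (E + iη))⁻¹ δ_x‖` for every `η > 0`, so it exists
only when `γ_x(E)` is finite, hence, almost surely, only for a Lebesgue null set of `E ∈ I`.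
Green's identity `(E - E') ⟪φ', φ⟫ = t - t'` shows that `t` is a Lipschitz function of `E` as long
as the normalized eigenvectors stay bounded; therefore only a null set of couplings `t` produces an
eigenvalue in `I` whose eigenvector does not vanish at `x`. As the conditional law of `V x` is
absolutely continuous, the actual value of `V x` almost surely avoids this null set. An eigenvector
which vanishes at every site is zero.

The event "there is an eigenvalue in `I`" is a projection of a Borel set. It is replaced by a Borel
event: normalized eigenvectors of bounded norm have finitely many eigenvalues, so each of these is
the least one in some rational interval, and least eigenvalues depend measurably on `V`.
-/

namespace SimonWolff

section RankOne

variable {X Y : Type*} [EMetricSpace X] [MeasurableSpace X] [BorelSpace X]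
  [EMetricSpace Y] [MeasurableSpace Y] [BorelSpace Y]

theorem hausdorffMeasure_eq_zero_of_antilipschitzWith {s : Set X} {N : Set Y} {K : NNReal}
    {g : s → Y} (hg : AntilipschitzWith K g) (hgN : ∀ a, g a ∈ N) {d : ℝ} (hd : 0 ≤ d)
    (hN : μH[d] N = 0) : μH[d] s = 0 := by
  have himage : μH[d] (g '' Set.univ) = 0 :=
    measure_mono_null (Set.image_subset_iff.2 fun a _ => hgN a) hN
  rw [← Subtype.range_coe (s := s), ← Set.image_univ,
    isometry_subtype_coe.hausdorffMeasure_image (Or.inl hd)]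
  simpa only [himage, mul_zero, nonpos_iff_eq_zero] using hg.le_hausdorffMeasure_image hd Set.univ

variable {𝕜 ℋ : Type*} [RCLike 𝕜] [NormedAddCommGroup ℋ] [InnerProductSpace 𝕜 ℋ]

/-- `φ` is an eigenvector, with eigenvalue `E`, of the rank-one perturbation `T + t ⟪e, ·⟫ e`,
normalized by `⟪e, φ⟫ = 1`. The normalization singles out the eigenvectors seen by `e` and lets the
perturbation act as `t • e`. -/
def IsNormalizedEigenvector (T : ℋ →ₗ[𝕜] ℋ) (e : ℋ) (t E : ℝ) (φ : ℋ) : Prop :=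
  inner 𝕜 e φ = 1 ∧ T φ + (t : 𝕜) • e = (E : 𝕜) • φ

namespace IsNormalizedEigenvector

variable {T : ℋ →ₗ[𝕜] ℋ} {e φ φ' : ℋ} {t t' E E' r : ℝ}

theorem sub_mul_inner (hT : T.IsSymmetric) (h : IsNormalizedEigenvector T e t E φ)
    (h' : IsNormalizedEigenvector T e t' E' φ') :
    ((E : 𝕜) - E') * inner 𝕜 φ' φ = (t : 𝕜) - t' := by
  have hφ : inner 𝕜 φ' (T φ) = E * inner 𝕜 φ' φ - t := by
    have he : inner 𝕜 φ' e = 1 := by rw [← inner_conj_symm, h'.1, map_one]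
    rw [eq_sub_of_add_eq h.2, inner_sub_right, inner_smul_right, inner_smul_right, he, mul_one]
  have hφ' : inner 𝕜 (T φ') φ = E' * inner 𝕜 φ' φ - t' := by
    rw [eq_sub_of_add_eq h'.2, inner_sub_left, inner_smul_left, inner_smul_left, h.1,
      RCLike.conj_ofReal, RCLike.conj_ofReal, mul_one]
  linear_combination hφ' - hφ - hT φ' φ

theorem abs_sub_le (hT : T.IsSymmetric) (h : IsNormalizedEigenvector T e t E φ)
    (h' : IsNormalizedEigenvector T e t' E' φ') (hφ : ‖φ‖ ≤ r) (hφ' : ‖φ'‖ ≤ r) :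
    |t - t'| ≤ r ^ 2 * |E - E'| := by
  have hinner : ‖inner 𝕜 φ' φ‖ ≤ r ^ 2 :=
    (norm_inner_le_norm _ _).trans <| (mul_le_mul hφ' hφ (norm_nonneg _)
      ((norm_nonneg _).trans hφ')).trans_eq (sq r).symm
  calc |t - t'| = |E - E'| * ‖inner 𝕜 φ' φ‖ := by
        simpa only [norm_mul, ← RCLike.ofReal_sub, RCLike.norm_ofReal] using
          (congrArg norm (sub_mul_inner hT h h')).symm
    _ ≤ r ^ 2 * |E - E'| := by rw [mul_comm]; gcongr

theorem inner_eq_zero (hT : T.IsSymmetric) (h : IsNormalizedEigenvector T e t E φ)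
    (h' : IsNormalizedEigenvector T e t E' φ') (hne : E ≠ E') : inner 𝕜 φ' φ = 0 := by
  have hgreen := sub_mul_inner hT h h'
  rw [sub_self, mul_eq_zero, sub_eq_zero, RCLike.ofReal_inj] at hgreen
  exact hgreen.resolve_left hne

theorem exists_apply_sub_smul_eq (h : IsNormalizedEigenvector T e t E φ) (ht : t ≠ 0) :
    ∃ ψ, T ψ - (E : 𝕜) • ψ = e := by
  have ht' : (t : 𝕜) ≠ 0 := RCLike.ofReal_ne_zero.2 ht
  refine ⟨-(t : 𝕜)⁻¹ • φ, ?_⟩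
  rw [map_smul, smul_comm, ← smul_sub, ← h.2, sub_add_cancel_left, neg_smul_neg,
    inv_smul_smul₀ ht']

end IsNormalizedEigenvector

theorem finite_of_pairwise_inner_eq_zero {ι : Type*} {φ : ι → ℋ} {e : ℋ} {r : ℝ}
    (horth : Pairwise fun i j => inner 𝕜 (φ i) (φ j) = 0) (he : ∀ i, inner 𝕜 e (φ i) = 1)
    (hr : ∀ i, ‖φ i‖ ≤ r) : Finite ι := by
  have hne (i : ι) : φ i ≠ 0 := fun h => by simpa [h] using he i
  have hpos (i : ι) : 0 < ‖φ i‖ := norm_pos_iff.2 (hne i)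
  have hnormed : Orthonormal 𝕜 fun i => (‖φ i‖ : 𝕜)⁻¹ • φ i := by
    refine ⟨fun i => norm_smul_inv_norm (hne i), fun i j hij => ?_⟩
    simp only [inner_smul_left, inner_smul_right, horth hij, mul_zero]
  have hlower (i : ι) : r⁻¹ ^ 2 ≤ ‖inner 𝕜 ((‖φ i‖ : 𝕜)⁻¹ • φ i) e‖ ^ 2 := by
    rw [norm_inner_symm, inner_smul_right, he, mul_one, norm_inv, RCLike.norm_ofReal, abs_norm]
    have := hpos i
    have : 0 < r := (hpos i).trans_le (hr i)
    gcongr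
    exact hr i
  -- By Bessel's inequality the terms bounded below by `r⁻²` are those of a summable family.
  have htendsto := (hnormed.inner_products_summable e).tendsto_cofinite_zero
  by_contra hinf
  rw [not_finite_iff_infinite] at hinf
  obtain ⟨i⟩ := hinf.nonempty
  have hr0 : 0 < r⁻¹ ^ 2 := pow_pos (inv_pos.2 ((hpos i).trans_le (hr i))) 2
  obtain ⟨j, hj⟩ := (htendsto.eventually_lt_const hr0).exists
  exact (hlower j).not_gt hj

variable {T : ℋ →ₗ[𝕜] ℋ}

theorem finite_setOf_normalizedEigenvalue (hT : T.IsSymmetric) (e : ℋ) (t r : ℝ) :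
    {E : ℝ | ∃ φ, ‖φ‖ ≤ r ∧ IsNormalizedEigenvector T e t E φ}.Finite := by
  choose φ hφr hφ using
    fun E : {E : ℝ | ∃ φ, ‖φ‖ ≤ r ∧ IsNormalizedEigenvector T e t E φ} => E.2
  refine Set.finite_coe_iff.1 (finite_of_pairwise_inner_eq_zero ?_ (fun E => (hφ E).1) hφr)
  exact fun E E' hne => (hφ E').inner_eq_zero hT (hφ E) (Subtype.coe_ne_coe.2 hne.symm)

theorem volume_setOf_normalizedEigenvector_eq_zero (hT : T.IsSymmetric) (e : ℋ) {N : Set ℝ}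
    (hN : volume N = 0) (r : NNReal) :
    volume {t : ℝ | ∃ E ∈ N, ∃ φ, ‖φ‖ ≤ r ∧ IsNormalizedEigenvector T e t E φ} = 0 := by
  rw [← hausdorffMeasure_real] at hN ⊢
  choose E hEN φ hφr hφ using
    fun t : {t : ℝ | ∃ E ∈ N, ∃ φ, ‖φ‖ ≤ r ∧ IsNormalizedEigenvector T e t E φ} => t.2
  have hE : AntilipschitzWith (r ^ 2) E := AntilipschitzWith.of_le_mul_dist fun t t' => by
    simpa only [Subtype.dist_eq, Real.dist_eq, NNReal.coe_pow] using
      (hφ t).abs_sub_le hT (hφ t') (hφr t) (hφr t')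
  exact hausdorffMeasure_eq_zero_of_antilipschitzWith hE hEN zero_le_one hN

theorem ae_forall_not_isNormalizedEigenvector (hT : T.IsSymmetric) {e : ℋ} {I : Set ℝ}
    (hI : ∀ᵐ E ∂volume.restrict I, ∀ ψ, T ψ - ((E : ℝ) : 𝕜) • ψ ≠ e) :
    ∀ᵐ t, ∀ E ∈ I, ∀ φ, ¬ IsNormalizedEigenvector T e t E φ := by
  set N := {E : ℝ | ∃ ψ, T ψ - (E : 𝕜) • ψ = e} ∩ I
  have hN : volume N = 0 := by
    refine measure_mono_null (Set.inter_subset_inter_left I fun E => ?_)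
      (le_antisymm ((Measure.le_restrict_apply _ _).trans_eq hI) zero_le)
    simp
  have hnull (n : ℕ) :
      ∀ᵐ t, t ∉ {t : ℝ | ∃ E ∈ N, ∃ φ, ‖φ‖ ≤ n ∧ IsNormalizedEigenvector T e t E φ} :=
    measure_eq_zero_iff_ae_notMem.1 (volume_setOf_normalizedEigenvector_eq_zero hT e hN n)
  have hne : ∀ᵐ t : ℝ, t ≠ 0 := measure_eq_zero_iff_ae_notMem.1 (measure_singleton 0)
  filter_upwards [ae_all_iff.2 hnull, hne] with t ht ht0 E hE φ hφ
  obtain ⟨n, hn⟩ := exists_nat_ge ‖φ‖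
  exact ht n ⟨E, ⟨hφ.exists_apply_sub_smul_eq ht0, hE⟩, φ, hn, hφ⟩

end RankOne

section Resolvent

variable {ℋ : Type*} [NormedAddCommGroup ℋ] [InnerProductSpace ℂ ℋ]

theorem norm_le_norm_of_apply_sub_smul_eq {T : ℋ →ₗ[ℂ] ℋ} (hT : T.IsSymmetric) {e ψ w : ℋ}
    {E η : ℝ} (hη : η ≠ 0) (hψ : T ψ - (E : ℂ) • ψ = e)
    (hw : T w - ((E : ℂ) + η * Complex.I) • w = e) : ‖w‖ ≤ ‖ψ‖ := by
  have hdiff : T (w - ψ) = (E : ℂ) • (w - ψ) + (η * Complex.I) • w := by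
    rw [map_sub, eq_add_of_sub_eq hψ, eq_add_of_sub_eq hw]
    module
  have horth : (inner ℂ (w - ψ) w).re = 0 := by
    have him := hT.im_inner_self_apply (w - ψ)
    rw [hdiff, inner_add_right, inner_smul_right, inner_smul_right, inner_self_eq_norm_sq_to_K]
      at him
    have him' : η * (inner ℂ (w - ψ) w).re = 0 := by
      simpa only [Complex.coe_algebraMap, ← Complex.ofReal_pow, ← Complex.ofReal_mul,
        Complex.add_im, Complex.ofReal_im, zero_add, mul_assoc, Complex.im_ofReal_mul,
        Complex.I_mul_im, RCLike.im_to_complex] using him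
    exact (mul_eq_zero.1 him').resolve_left hη
  have hsq : ‖w‖ ^ 2 ≤ ‖ψ‖ * ‖w‖ := calc
    ‖w‖ ^ 2 = (inner ℂ ψ w).re := by
      rw [inner_sub_left, Complex.sub_re, sub_eq_zero] at horth
      exact (inner_self_eq_norm_sq (𝕜 := ℂ) w).symm.trans horth
    _ ≤ ‖ψ‖ * ‖w‖ := (Complex.re_le_norm _).trans (norm_inner_le_norm _ _)
  by_contra! hlt
  nlinarith [norm_nonneg ψ]

theorem norm_inverse_apply_le {T : ℋ →L[ℂ] ℋ} (hT : (T : ℋ →ₗ[ℂ] ℋ).IsSymmetric) {e ψ : ℋ}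
    {E η : ℝ} (hη : η ≠ 0) (hψ : T ψ - (E : ℂ) • ψ = e) :
    ‖Ring.inverse (T - ((E : ℂ) + η * Complex.I) • 1) e‖ ≤ ‖ψ‖ := by
  by_cases hunit : IsUnit (T - ((E : ℂ) + η * Complex.I) • 1)
  · refine norm_le_norm_of_apply_sub_smul_eq hT hη hψ ?_
    exact DFunLike.congr_fun (Ring.mul_inverse_cancel _ hunit) e
  · rw [Ring.inverse_non_unit _ hunit, zero_apply, norm_zero]
    exact norm_nonneg ψ

theorem apply_sub_smul_ne_of_iSup_eq_top {T : ℋ →L[ℂ] ℋ} (hT : (T : ℋ →ₗ[ℂ] ℋ).IsSymmetric)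
    {e : ℋ} {E : ℝ}
    (htop : (⨆ η : {η : ℝ // 0 < η}, ENNReal.ofReal
      (‖Ring.inverse (T - ((E : ℂ) + (η : ℝ) * Complex.I) • 1) e‖ ^ 2)) = ⊤) (ψ : ℋ) :
    T ψ - (E : ℂ) • ψ ≠ e := by
  intro hψ
  refine ENNReal.ofReal_ne_top (r := ‖ψ‖ ^ 2) (top_le_iff.1 (htop.ge.trans (iSup_le fun η => ?_)))
  gcongr
  exact norm_inverse_apply_le hT η.2.ne' hψ

end Resolvent

section ClosedProjection

variable {X Y : Type*} [TopologicalSpace X] [TopologicalSpace Y]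

theorem isClosed_setOf_exists_mem_isCompact {F : Set (X × Y)} (hF : IsClosed F) {K : Set Y}
    (hK : IsCompact K) : IsClosed {x | ∃ y ∈ K, (x, y) ∈ F} := by
  have : CompactSpace K := isCompact_iff_compactSpace.1 hK
  convert isClosedMap_fst_of_compactSpace (X := X) (Y := K) _
    (hF.preimage (continuous_fst.prodMk (continuous_subtype_val.comp continuous_snd))) using 1
  ext x
  simp

variable {𝕜 ℋ : Type*} [RCLike 𝕜] [NormedAddCommGroup ℋ] [InnerProductSpace 𝕜 ℋ] [CompleteSpace ℋ]

theorem isCompact_toWeakSpace_image_closedBall (r : ℝ) :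
    IsCompact (toWeakSpace 𝕜 ℋ '' Metric.closedBall 0 r) := by
  let riesz : WeakDual 𝕜 ℋ → WeakSpace 𝕜 ℋ := fun L =>
    toWeakSpace 𝕜 ℋ ((InnerProductSpace.toDual 𝕜 ℋ).symm (WeakDual.toStrongDual L))
  have hriesz : Continuous riesz := by
    refine WeakBilin.continuous_of_continuous_eval _ fun f => ?_
    obtain ⟨v, rfl⟩ := (InnerProductSpace.toDual 𝕜 ℋ).surjective f
    have heval (L : WeakDual 𝕜 ℋ) : inner 𝕜 v ((InnerProductSpace.toDual 𝕜 ℋ).symm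
        (WeakDual.toStrongDual L)) = starRingEnd 𝕜 (L v) := by
      rw [← inner_conj_symm, InnerProductSpace.toDual_symm_apply]
      rfl
    exact (RCLike.continuous_conj.comp (WeakDual.eval_continuous v)).congr fun L => (heval L).symm
  convert (WeakDual.isCompact_closedBall (𝕜 := 𝕜) (E := ℋ) 0 r).image hriesz using 1
  ext φ
  constructor
  · rintro ⟨ψ, hψ, rfl⟩
    refine ⟨StrongDual.toWeakDual (InnerProductSpace.toDual 𝕜 ℋ ψ), ?_, ?_⟩
    · simpa using hψ
    · simp [riesz]
  · rintro ⟨L, hL, rfl⟩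
    refine ⟨(InnerProductSpace.toDual 𝕜 ℋ).symm (WeakDual.toStrongDual L), ?_, rfl⟩
    simpa using hL

theorem isClosed_setOf_exists_norm_le {F : Set (X × WeakSpace 𝕜 ℋ)} (hF : IsClosed F) (r : ℝ) :
    IsClosed {q | ∃ φ : ℋ, ‖φ‖ ≤ r ∧ (q, toWeakSpace 𝕜 ℋ φ) ∈ F} := by
  simpa using isClosed_setOf_exists_mem_isCompact hF (isCompact_toWeakSpace_image_closedBall r)

end ClosedProjection

section FirstHit

variable {X : Type*} [TopologicalSpace X] {F : Set (X × ℝ)}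

/-- The least point of the section `F x` in `[q, r]`, or `r` if there is none. It serves to
enumerate the points of finite sections measurably in `x`. -/
noncomputable def firstHit (F : Set (X × ℝ)) (q r : ℝ) (x : X) : ℝ :=
  sInf (insert r {s ∈ Set.Icc q r | (x, s) ∈ F})

theorem isLeast_firstHit (hF : IsClosed F) (q r : ℝ) (x : X) :
    IsLeast (insert r {s ∈ Set.Icc q r | (x, s) ∈ F}) (firstHit F q r x) :=
  ((isCompact_Icc.inter_right (hF.preimage (Continuous.prodMk_right x))).insert r).isLeast_sInf
    (Set.insert_nonempty r _)

theorem mem_of_firstHit_lt (hF : IsClosed F) {q r : ℝ} {x : X} (h : firstHit F q r x < r) :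
    (x, firstHit F q r x) ∈ F :=
  ((isLeast_firstHit hF q r x).1.resolve_left h.ne).2

theorem measurable_firstHit [MeasurableSpace X] [OpensMeasurableSpace X] (hF : IsClosed F)
    (q r : ℝ) : Measurable (firstHit F q r) := by
  refine measurable_of_Iic fun c => ?_
  have hpreimage : firstHit F q r ⁻¹' Set.Iic c =
      {x | ∃ s ∈ Set.Icc q (min r c), (x, s) ∈ F} ∪ {_x | r ≤ c} := by
    ext x
    have hleast := isLeast_firstHit hF q r x
    constructor
    · intro hc
      rcases hleast.1 with hr | ⟨hmem, hFx⟩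
      · exact Or.inr (hr.ge.trans hc)
      · exact Or.inl ⟨_, ⟨hmem.1, le_min hmem.2 hc⟩, hFx⟩
    · rintro (⟨s, hs, hFx⟩ | hr)
      · exact (hleast.2 (Or.inr ⟨⟨hs.1, hs.2.trans (min_le_left r c)⟩, hFx⟩)).trans
          (hs.2.trans (min_le_right r c))
      · exact (hleast.2 (Set.mem_insert r _)).trans hr
  rw [hpreimage]
  exact (isClosed_setOf_exists_mem_isCompact hF isCompact_Icc).measurableSet.union
    (MeasurableSet.const _)

theorem exists_rat_firstHit_eq (hF : IsClosed F) {x : X} (hfin : {s | (x, s) ∈ F}.Finite) {s : ℝ}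
    (hs : (x, s) ∈ F) : ∃ q r : ℚ, s < r ∧ firstHit F q r x = s := by
  have hnhds : ({s | (x, s) ∈ F} \ {s})ᶜ ∈ 𝓝 s :=
    hfin.sdiff.isClosed.isOpen_compl.mem_nhds (by simp)
  obtain ⟨l, hl, hlsub⟩ := exists_Ioc_subset_of_mem_nhds hnhds (exists_lt s)
  obtain ⟨q, hlq, hqs⟩ := exists_rat_btwn hl
  obtain ⟨r, hsr⟩ := exists_rat_gt s
  have hleast := isLeast_firstHit hF q r x
  have hle : firstHit F q r x ≤ s := hleast.2 (Or.inr ⟨⟨hqs.le, hsr.le⟩, hs⟩)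
  have hmem := hleast.1.resolve_left (hle.trans_lt hsr).ne
  refine ⟨q, r, hsr, not_not.1 fun hne => ?_⟩
  exact hlsub ⟨hlq.trans_le hmem.1.1, hle⟩ ⟨hmem.2, hne⟩

/-- For sections that need not be finite, the projection of `F ∩ (X × I)` is only analytic, which
is why `S` is allowed to be smaller. -/
theorem exists_measurableSet_subset_projection [MeasurableSpace X] [OpensMeasurableSpace X]
    (hF : IsClosed F) {I : Set ℝ} (hI : MeasurableSet I) :
    ∃ S : Set X, MeasurableSet S ∧ (∀ x ∈ S, ∃ s ∈ I, (x, s) ∈ F) ∧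
      ∀ x, {s | (x, s) ∈ F}.Finite → ∀ s ∈ I, (x, s) ∈ F → x ∈ S := by
  refine ⟨⋃ (q : ℚ) (r : ℚ), firstHit F q r ⁻¹' (I ∩ Set.Iio (r : ℝ)),
    .iUnion fun q => .iUnion fun r => measurable_firstHit hF q r (hI.inter measurableSet_Iio),
    fun x hx => ?_, fun x hfin s hsI hs => ?_⟩
  · obtain ⟨q, r, hhit, hlt⟩ := Set.mem_iUnion₂.1 hx
    exact ⟨_, hhit, mem_of_firstHit_lt hF hlt⟩
  · obtain ⟨q, r, hsr, hhit⟩ := exists_rat_firstHit_eq hF hfin hs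
    exact Set.mem_iUnion₂.2 ⟨q, r, by simp [hhit, hsI, hsr]⟩

end FirstHit

section ConditionalLaw

variable {Ω B α : Type*} [MeasurableSpace Ω] [MeasurableSpace B] [MeasurableSpace α]
  [StandardBorelSpace α] [Nonempty α] {μ : Measure Ω} [IsFiniteMeasure μ]
  {ν : Measure α} [SFinite ν]

theorem map_prodMk_absolutelyContinuous {X : Ω → B} {Y : Ω → α} (hY : AEMeasurable Y μ)
    (hac : ∀ᵐ b ∂μ.map X, condDistrib Y X μ b ≪ ν) :
    μ.map (fun ω => (X ω, Y ω)) ≪ (μ.map X).prod ν := by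
  rw [← compProd_map_condDistrib hY, ← Measure.compProd_const]
  exact Measure.AbsolutelyContinuous.compProd_right hac

theorem ae_mem_of_ae_ae_update_mem {G : Type*} [DecidableEq G] {V : Ω → G → α}
    (hV : Measurable V) {x : G}
    (hac : ∀ᵐ b ∂μ.map (fun ω (y : {y : G // y ≠ x}) => V ω y),
      condDistrib (fun ω => V ω x) (fun ω (y : {y : G // y ≠ x}) => V ω y) μ b ≪ ν)
    {S : Set (G → α)} (hS : MeasurableSet S)
    (h : ∀ᵐ ω ∂μ, ∀ᵐ v ∂ν, Function.update (V ω) x v ∈ S) : ∀ᵐ ω ∂μ, V ω ∈ S := by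
  set X : Ω → {y : G // y ≠ x} → α := fun ω y => V ω y
  have hX : Measurable X := by fun_prop
  have hY : Measurable fun ω => V ω x := by fun_prop
  let glue : ({y : G // y ≠ x} → α) × α → G → α := fun c => (Equiv.funSplitAt x α).symm c.swap
  have hglue : Measurable glue := by
    refine measurable_pi_lambda _ fun y => ?_
    by_cases hy : y = x
    · simp only [glue, Equiv.funSplitAt_symm_apply, hy, dite_true]
      fun_prop
    · simp only [glue, Equiv.funSplitAt_symm_apply, hy, dite_false]
      fun_prop
  have hglue_update (ω : Ω) (v : α) : glue (X ω, v) = Function.update (V ω) x v := by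
    ext y
    by_cases hy : y = x <;> simp [glue, X, hy]
  have hprod : ∀ᵐ c ∂(μ.map X).prod ν, glue c ∈ S := by
    refine (Measure.ae_prod_mem_iff_ae_ae_mem (hglue hS)).2 ?_
    refine (ae_map_iff hX.aemeasurable ?_).2 ?_
    · exact measurable_measure_prodMk_left (hglue hS).compl (measurableSet_singleton 0)
    · simpa only [Set.mem_preimage, hglue_update] using h
  have hlaw := (map_prodMk_absolutelyContinuous hY.aemeasurable hac).ae_le hprod
  filter_upwards [ae_of_ae_map (hX.prodMk hY).aemeasurable hlaw] with ω hω
  simpa [hglue_update] using hω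

end ConditionalLaw

local notation "ℓ²(" G ")" => lp (fun _ : G => ℂ) 2

section Schrodinger

variable {G : Type*} {A H : ℓ²(G) →L[ℂ] ℓ²(G)} {p : G → ℝ} {E : ℝ} {f φ : ℓ²(G)}

theorem isSymmetric_of_apply_eq_add_mul (hA : IsSelfAdjoint A)
    (hH : ∀ (ψ : ℓ²(G)) (u : G), H ψ u = A ψ u + (p u : ℂ) * ψ u) :
    (H : ℓ²(G) →ₗ[ℂ] ℓ²(G)).IsSymmetric := by
  have hdiff (ψ : ℓ²(G)) (u : G) : (H - A) ψ u = p u * ψ u := by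
    change H ψ u - A ψ u = _
    rw [hH, add_sub_cancel_left]
  have hpot : ((H - A : ℓ²(G) →L[ℂ] ℓ²(G)) : ℓ²(G) →ₗ[ℂ] ℓ²(G)).IsSymmetric := by
    intro φ ψ
    simp only [lp.inner_eq_tsum]
    refine tsum_congr fun u => ?_
    simp only [ContinuousLinearMap.coe_coe, hdiff, RCLike.inner_apply, map_mul,
      Complex.conj_ofReal]
    ring
  simpa using hpot.add hA.isSymmetric

/-- The Schrödinger equation `(A + p - E) φ = f`. It is read site by site so that it makes sense
for unbounded potentials `p` too, where `A + p` is not a bounded operator. -/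
def IsSolution (A : ℓ²(G) →L[ℂ] ℓ²(G)) (p : G → ℝ) (E : ℝ) (f φ : ℓ²(G)) : Prop :=
  ∀ u, A φ u + ((p u : ℂ) - E) * φ u = f u

theorem isSolution_iff (hH : ∀ (ψ : ℓ²(G)) (u : G), H ψ u = A ψ u + (p u : ℂ) * ψ u) :
    IsSolution A p E f φ ↔ H φ - (E : ℂ) • φ = f := by
  rw [lp.ext_iff, funext_iff]
  refine forall_congr' fun u => ?_
  simp only [lp.coeFn_sub, lp.coeFn_smul, Pi.sub_apply, Pi.smul_apply, smul_eq_mul, hH]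
  ring_nf

theorem isClosed_setOf_isSolution (A : ℓ²(G) →L[ℂ] ℓ²(G)) (f : ℓ²(G)) :
    IsClosed {z : ((G → ℝ) × ℝ) × WeakSpace ℂ ℓ²(G) |
      IsSolution A z.1.1 z.1.2 f ((toWeakSpace ℂ ℓ²(G)).symm z.2)} := by
  have heval (u : G) : Continuous fun φ : WeakSpace ℂ ℓ²(G) => (toWeakSpace ℂ ℓ²(G)).symm φ u :=
    WeakBilin.eval_continuous _ (lp.evalCLM ℂ (fun _ : G => ℂ) 2 u)
  have hevalA (u : G) :
      Continuous fun φ : WeakSpace ℂ ℓ²(G) => A ((toWeakSpace ℂ ℓ²(G)).symm φ) u :=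
    WeakBilin.eval_continuous _ ((lp.evalCLM ℂ (fun _ : G => ℂ) 2 u).comp A)
  have hcoeff (u : G) : Continuous fun z : ((G → ℝ) × ℝ) × WeakSpace ℂ ℓ²(G) =>
      (z.1.1 u : ℂ) - z.1.2 := by fun_prop
  simp only [IsSolution, Set.ofPred_forall]
  refine isClosed_iInter fun u => isClosed_eq ?_ continuous_const
  exact ((hevalA u).comp continuous_snd).add ((hcoeff u).mul ((heval u).comp continuous_snd))

theorem measurableSet_setOf_exists_isSolution [Countable G] (A : ℓ²(G) →L[ℂ] ℓ²(G)) (f : ℓ²(G)) :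
    MeasurableSet {q : (G → ℝ) × ℝ | ∃ ψ, IsSolution A q.1 q.2 f ψ} := by
  have hUnion : {q : (G → ℝ) × ℝ | ∃ ψ, IsSolution A q.1 q.2 f ψ} =
      ⋃ n : ℕ, {q | ∃ ψ, ‖ψ‖ ≤ n ∧ IsSolution A q.1 q.2 f ψ} := by
    ext q
    constructor
    · rintro ⟨ψ, hψ⟩
      obtain ⟨n, hn⟩ := exists_nat_ge ‖ψ‖
      exact Set.mem_iUnion.2 ⟨n, ψ, hn, hψ⟩
    · intro hq
      obtain ⟨-, ψ, -, hψ⟩ := Set.mem_iUnion.1 hq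
      exact ⟨ψ, hψ⟩
  rw [hUnion]
  exact .iUnion fun n =>
    (isClosed_setOf_exists_norm_le (isClosed_setOf_isSolution A f) n).measurableSet

/-- The pairs `(p, E)` such that `A + p` has the eigenvalue `E` with an eigenvector `φ` satisfying
`φ x = 1` and `‖φ‖ ≤ r`. The normalization and the bound make this a closed set. -/
def normalizedEigenvalues (A : ℓ²(G) →L[ℂ] ℓ²(G)) (x : G) (r : ℝ) : Set ((G → ℝ) × ℝ) :=
  {q | ∃ φ : ℓ²(G), ‖φ‖ ≤ r ∧ φ x = 1 ∧ IsSolution A q.1 q.2 0 φ}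

theorem isClosed_normalizedEigenvalues (A : ℓ²(G) →L[ℂ] ℓ²(G)) (x : G) (r : ℝ) :
    IsClosed (normalizedEigenvalues A x r) := by
  have heval : Continuous fun φ : WeakSpace ℂ ℓ²(G) => (toWeakSpace ℂ ℓ²(G)).symm φ x :=
    WeakBilin.eval_continuous _ (lp.evalCLM ℂ (fun _ : G => ℂ) 2 x)
  exact isClosed_setOf_exists_norm_le
    ((isClosed_eq (heval.comp continuous_snd) continuous_const).inter
      (isClosed_setOf_isSolution A 0)) r

variable {x : G} {r v : ℝ}

theorem isNormalizedEigenvector_single_iff [DecidableEq G]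
    (hH : ∀ (ψ : ℓ²(G)) (u : G), H ψ u = A ψ u + (p u : ℂ) * ψ u) :
    IsNormalizedEigenvector (H : ℓ²(G) →ₗ[ℂ] ℓ²(G)) (lp.single 2 x (1 : ℂ)) (v - p x) E φ ↔
      φ x = 1 ∧ IsSolution A (Function.update p x v) E 0 φ := by
  have hinner : inner ℂ (lp.single 2 x (1 : ℂ)) φ = φ x := by simp [lp.inner_single_left]
  rw [IsNormalizedEigenvector, hinner, lp.ext_iff, funext_iff]
  refine and_congr_right fun hx => forall_congr' fun u => ?_
  have hpert : (H φ + ((v - p x : ℝ) : ℂ) • lp.single 2 x (1 : ℂ) : ℓ²(G)) u - ((E : ℂ) • φ) u =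
      A φ u + ((Function.update p x v u : ℂ) - E) * φ u := by
    rw [lp.coeFn_add, lp.coeFn_smul, lp.coeFn_smul, Pi.add_apply, Pi.smul_apply, Pi.smul_apply,
      smul_eq_mul, smul_eq_mul, hH]
    rcases eq_or_ne u x with rfl | hu
    · rw [lp.single_apply_self, Function.update_self, hx]
      push_cast
      ring
    · rw [lp.single_apply_ne _ _ _ hu, Function.update_of_ne hu]
      ring
  rw [← sub_eq_zero]
  exact Eq.congr_left hpert

theorem mem_normalizedEigenvalues_update_iff [DecidableEq G]
    (hH : ∀ (ψ : ℓ²(G)) (u : G), H ψ u = A ψ u + (p u : ℂ) * ψ u) :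
    (Function.update p x v, E) ∈ normalizedEigenvalues A x r ↔
      ∃ φ, ‖φ‖ ≤ r ∧ IsNormalizedEigenvector (H : ℓ²(G) →ₗ[ℂ] ℓ²(G)) (lp.single 2 x (1 : ℂ))
        (v - p x) E φ := by
  simp only [isNormalizedEigenvector_single_iff hH]
  rfl

theorem finite_section_normalizedEigenvalues (hA : IsSelfAdjoint A)
    (hH : ∀ (ψ : ℓ²(G)) (u : G), H ψ u = A ψ u + (p u : ℂ) * ψ u) (x : G) (r : ℝ) :
    {E | (p, E) ∈ normalizedEigenvalues A x r}.Finite := by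
  classical
  have hfinite := finite_setOf_normalizedEigenvalue (isSymmetric_of_apply_eq_add_mul hA hH)
    (lp.single 2 x (1 : ℂ)) (p x - p x) r
  simpa only [← mem_normalizedEigenvalues_update_iff hH, Function.update_eq_self] using hfinite

theorem eq_zero_of_forall_notMem_normalizedEigenvalues
    (hH : ∀ (ψ : ℓ²(G)) (u : G), H ψ u = A ψ u + (p u : ℂ) * ψ u)
    (hE : ∀ (x : G) (n : ℕ), (p, E) ∉ normalizedEigenvalues A x n) (hφ : H φ = (E : ℂ) • φ) :
    φ = 0 := by
  refine lp.ext (funext fun x => by_contra fun hx => ?_)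
  obtain ⟨n, hn⟩ := exists_nat_ge ‖(φ x)⁻¹ • φ‖
  refine hE x n ⟨(φ x)⁻¹ • φ, hn, inv_mul_cancel₀ hx, (isSolution_iff hH).2 ?_⟩
  rw [map_smul, hφ, smul_comm, sub_self]

end Schrodinger

section RandomPotential

variable {G Ω : Type*} [Countable G] [DecidableEq G] [MeasurableSpace Ω] {μ : Measure Ω}
  [IsFiniteMeasure μ] {V : Ω → G → ℝ} {A : ℓ²(G) →L[ℂ] ℓ²(G)} {H : Ω → ℓ²(G) →L[ℂ] ℓ²(G)}
  {I : Set ℝ} {x : G}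

theorem ae_ae_apply_sub_smul_ne (hV : Measurable V) (hA : IsSelfAdjoint A)
    (hH : ∀ ω (ψ : ℓ²(G)) (u : G), H ω ψ u = A ψ u + (V ω u : ℂ) * ψ u)
    (hγ : ∀ᵐ E : ℝ ∂volume.restrict I, ∀ᵐ ω ∂μ,
      (⨆ η : {η : ℝ // 0 < η}, ENNReal.ofReal
        (‖Ring.inverse (H ω - ((E : ℂ) + (η : ℝ) * Complex.I) • 1)
          (lp.single 2 x (1 : ℂ))‖ ^ 2)) = ⊤) :
    ∀ᵐ ω ∂μ, ∀ᵐ E : ℝ ∂volume.restrict I, ∀ ψ, H ω ψ - (E : ℂ) • ψ ≠ lp.single 2 x (1 : ℂ) := by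
  refine (Measure.ae_ae_comm
    (p := fun (E : ℝ) ω => ∀ ψ, H ω ψ - (E : ℂ) • ψ ≠ lp.single 2 x (1 : ℂ)) ?_).1 ?_
  · simp only [ne_eq, ← isSolution_iff (hH _), ← not_exists]
    exact ((measurableSet_setOf_exists_isSolution A _).preimage
      ((hV.comp measurable_snd).prodMk measurable_fst)).compl
  · filter_upwards [hγ] with E hE
    filter_upwards [hE] with ω hω
    exact apply_sub_smul_ne_of_iSup_eq_top (isSymmetric_of_apply_eq_add_mul hA (hH ω)) hω

theorem ae_forall_notMem_normalizedEigenvalues (hV : Measurable V) (hA : IsSelfAdjoint A)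
    (hac : ∀ᵐ b ∂μ.map (fun ω (y : {y : G // y ≠ x}) => V ω y),
      condDistrib (fun ω => V ω x) (fun ω (y : {y : G // y ≠ x}) => V ω y) μ b ≪ volume)
    (hH : ∀ ω (ψ : ℓ²(G)) (u : G), H ω ψ u = A ψ u + (V ω u : ℂ) * ψ u)
    (hrange : ∀ᵐ ω ∂μ, ∀ᵐ E : ℝ ∂volume.restrict I,
      ∀ ψ, H ω ψ - (E : ℂ) • ψ ≠ lp.single 2 x (1 : ℂ)) (r : ℝ) :
    ∀ᵐ ω ∂μ, ∀ E ∈ I, (V ω, E) ∉ normalizedEigenvalues A x r := by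
  rw [← Measure.restrict_toMeasurable_of_sFinite I] at hrange
  obtain ⟨S, hS, hSI, hIS⟩ := exists_measurableSet_subset_projection
    (isClosed_normalizedEigenvalues A x r) (measurableSet_toMeasurable volume I)
  have hupdate : ∀ᵐ ω ∂μ, ∀ᵐ v, Function.update (V ω) x v ∈ Sᶜ := by
    filter_upwards [hrange] with ω hω
    have hnone := ae_forall_not_isNormalizedEigenvector
      (isSymmetric_of_apply_eq_add_mul hA (hH ω)) hω
    have htranslate := (measurePreserving_sub_right volume (V ω x)).quasiMeasurePreserving
    filter_upwards [htranslate.ae hnone] with v hv hmem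
    obtain ⟨E, hE, hE'⟩ := hSI _ hmem
    obtain ⟨φ, -, hφ⟩ := (mem_normalizedEigenvalues_update_iff (hH ω)).1 hE'
    exact hv E hE φ hφ
  filter_upwards [ae_mem_of_ae_ae_update_mem hV hac hS.compl hupdate] with ω hω E hE hmem
  exact hω (hIS _ (finite_section_normalizedEigenvalues hA (hH ω) x r) E
    (subset_toMeasurable volume I hE) hmem)

end RandomPotential

end SimonWolff

theorem stmt17_general {G : Type*} [Countable G] [DecidableEq G]
    {Ω : Type*} [MeasurableSpace Ω] (μ : Measure Ω) [IsFiniteMeasure μ]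
    (V : Ω → G → ℝ) (hVmeas : Measurable V)
    (hac : ∀ x : G,
      ∀ᵐ b ∂(μ.map (fun ω (y : {y : G // y ≠ x}) => V ω (y : G))),
        condDistrib (fun ω => V ω x) (fun ω (y : {y : G // y ≠ x}) => V ω (y : G)) μ b
          ≪ (volume : Measure ℝ))
    (A : lp (fun _ : G => ℂ) 2 →L[ℂ] lp (fun _ : G => ℂ) 2) (hA : IsSelfAdjoint A)
    (H : Ω → (lp (fun _ : G => ℂ) 2 →L[ℂ] lp (fun _ : G => ℂ) 2))
    (hH : ∀ ω (ψ : lp (fun _ : G => ℂ) 2) (u : G),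
      (H ω ψ : ∀ _ : G, ℂ) u = (A ψ : ∀ _ : G, ℂ) u + (V ω u : ℂ) * (ψ : ∀ _ : G, ℂ) u)
    (I : Set ℝ)
    (hγ : ∀ x : G, ∀ᵐ (E : ℝ) ∂((volume : Measure ℝ).restrict I), ∀ᵐ ω ∂μ,
      (⨆ η : {η : ℝ // 0 < η}, ENNReal.ofReal
        (‖Ring.inverse (H ω - ((E : ℂ) + (η : ℝ) * Complex.I) • 1)
          (lp.single 2 x (1:ℂ))‖ ^ 2)) = ⊤) :
    ∀ᵐ ω ∂μ, ∀ E ∈ I, ∀ φ : lp (fun _ : G => ℂ) 2,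
      H ω φ = (E : ℂ) • φ → φ = 0 := by
  have hrange (x : G) := SimonWolff.ae_ae_apply_sub_smul_ne hVmeas hA hH (hγ x)
  have hnone (x : G) (n : ℕ) :=
    SimonWolff.ae_forall_notMem_normalizedEigenvalues hVmeas hA (hac x) hH (hrange x) n
  filter_upwards [ae_all_iff.2 fun x => ae_all_iff.2 (hnone x)] with ω hω E hE φ hφ
  exact SimonWolff.eq_zero_of_forall_notMem_normalizedEigenvalues (hH ω)
    (fun x n => hω x n E hE) hφ

/-- Simon–Wolff criterion: for `H(ω) = A + V(ω)` on `ℓ²(G)` with a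
jointly measurable, uniformly bounded random potential whose single-site regular conditional
distributions are almost surely absolutely continuous w.r.t. Lebesgue measure, if for every
`x`, Lebesgue-almost every `E ∈ I` and almost every `ω` the quantity
`γ_x(E;ω) = lim_{η↓0} ‖(H(ω)-(E+iη))⁻¹δ_x‖²` (the supremum over `η > 0`) is infinite, then
almost surely `H(ω)` has no eigenvalues in `I`. -/
theorem stmt17 {G : Type*} [Countable G] [DecidableEq G]
    {Ω : Type*} [MeasurableSpace Ω] (μ : Measure Ω) [IsProbabilityMeasure μ]
    (V : Ω → G → ℝ) (hVmeas : Measurable V)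
    (C : ℝ) (hVbdd : ∀ ω u, |V ω u| ≤ C)
    (hac : ∀ x : G,
      ∀ᵐ b ∂(μ.map (fun ω (y : {y : G // y ≠ x}) => V ω (y : G))),
        condDistrib (fun ω => V ω x) (fun ω (y : {y : G // y ≠ x}) => V ω (y : G)) μ b
          ≪ (volume : Measure ℝ))
    (A : lp (fun _ : G => ℂ) 2 →L[ℂ] lp (fun _ : G => ℂ) 2) (hA : IsSelfAdjoint A)
    (H : Ω → (lp (fun _ : G => ℂ) 2 →L[ℂ] lp (fun _ : G => ℂ) 2))
    (hH : ∀ ω (ψ : lp (fun _ : G => ℂ) 2) (u : G),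
      (H ω ψ : ∀ _ : G, ℂ) u = (A ψ : ∀ _ : G, ℂ) u + (V ω u : ℂ) * (ψ : ∀ _ : G, ℂ) u)
    (I : Set ℝ) (hI : MeasurableSet I)
    (hγ : ∀ x : G, ∀ᵐ (E : ℝ) ∂((volume : Measure ℝ).restrict I), ∀ᵐ ω ∂μ,
      (⨆ η : {η : ℝ // 0 < η}, ENNReal.ofReal
        (‖Ring.inverse (H ω - ((E : ℂ) + (η : ℝ) * Complex.I) • 1)
          (lp.single 2 x (1:ℂ))‖ ^ 2)) = ⊤) :
    ∀ᵐ ω ∂μ, ∀ E ∈ I, ∀ φ : lp (fun _ : G => ℂ) 2,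
      H ω φ = (E : ℂ) • φ → φ = 0 :=
  stmt17_general μ V hVmeas hac A hA H hH I hγ
end
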